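/- Let F₂ = ⟨a,b⟩ be the free group of rank two, viewed as the group of inner automorphisms inside Aut(F₂). There exists a transversal T for the left cosets of F₂ in Aut(F₂) such that for the word w = a b a² b² ⋯ aⁿ bⁿ, where n > 101, the set {η(w) : η ∈ T} satisfies the C'(1/6) cancellation property. -/

import Mathlib

open MeasureTheory

namespace IRSPaper


/-! ## Basic setup: the space of subgroups, invariant random subgroups -/

/-- The conjugation action of a group on its space of subgroups: `g • H = gHg⁻¹`. -/
def conjSub {G : Type*} [Group G] (g : G) (H : Subgroup G) : Subgroup G :=
  Subgroup.map ((MulAut.conj g).toMonoidHom) H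

/-- The topology on the space of subgroups of `G`, induced from the product topology
on `G → Bool` (i.e. the topology of `2^G`). -/
noncomputable instance instTopSub (G : Type*) [Group G] : TopologicalSpace (Subgroup G) :=
  TopologicalSpace.induced
    (fun (H : Subgroup G) (g : G) => @decide (g ∈ H) (Classical.dec _)) inferInstance

/-- The Borel σ-algebra on the space of subgroups. -/
noncomputable instance instMeasSub (G : Type*) [Group G] : MeasurableSpace (Subgroup G) :=
  borel _

instance instBorelSub (G : Type*) [Group G] : BorelSpace (Subgroup G) := ⟨rfl⟩

/-- An invariant random subgroup: a Borel probability measure on `Sub(G)` which is invariant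
under the conjugation action of `G`. -/
def IsIRS {G : Type*} [Group G] (θ : Measure (Subgroup G)) : Prop :=
  IsProbabilityMeasure θ ∧ ∀ g : G, Measure.map (conjSub g) θ = θ

/-- The basic set `N_F = {H ∈ Sub(G) : F ⊆ H}`. -/
def NSet {G : Type*} [Group G] (F : Set G) : Set (Subgroup G) :=
  {H : Subgroup G | F ⊆ (H : Set G)}

/-- For `Γ ≤ Δ` and `S ⊆ Δ`, the set of subgroups of `Γ` containing every element of `Γ`
whose image in `Δ` lies in `S`.  When `S = t⁻¹Ft ⊆ Γ`, this is exactly the basic set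
`N_{t⁻¹Ft}^Γ ⊆ Sub(Γ)`. -/
def NpullSet {Δ : Type*} [Group Δ] (Γ : Subgroup Δ) (S : Set Δ) : Set (Subgroup ↥Γ) :=
  {Λ : Subgroup ↥Γ | ∀ x : ↥Γ, (x : Δ) ∈ S → x ∈ Λ}

/-- `T` is a transversal for the left cosets `Δ/Γ`: each left coset `dΓ` contains exactly
one element of `T`. -/
def IsLeftTransversal {Δ : Type*} [Group Δ] (Γ : Subgroup Δ) (T : Set Δ) : Prop :=
  ∀ d : Δ, ∃! t : Δ, t ∈ T ∧ d⁻¹ * t ∈ Γ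

/-- The defining property of the co-induced invariant random subgroup
`ν = CIND_Γ^Δ(θ)` (with respect to the transversal `T`):  for every finite `F ⊆ Δ`,
`ν(N_F) = 0` if `F ⊄ core_Δ(Γ)` and `ν(N_F) = ∏_{t ∈ T} θ(N_{t⁻¹Ft}^Γ)` if `F ⊆ core_Δ(Γ)`. -/
def CindSpec {Δ : Type*} [Group Δ] (Γ : Subgroup Δ) (T : Set Δ)
    (θ : Measure (Subgroup ↥Γ)) (ν : Measure (Subgroup Δ)) : Prop :=
  ∀ F : Finset Δ,
    (¬ (F : Set Δ) ⊆ (Γ.normalCore : Set Δ) → ν (NSet (F : Set Δ)) = 0) ∧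
    ((F : Set Δ) ⊆ (Γ.normalCore : Set Δ) →
      ν (NSet (F : Set Δ)) =
        ∏' t : T, θ (NpullSet Γ ((fun d => (t : Δ)⁻¹ * d * (t : Δ)) '' (F : Set Δ))))

/-- Ergodicity of a (not necessarily probability-) measure-preserving action given by
an explicit family of maps: every invariant measurable set is null or conull. -/
def ErgodicAct {G α : Type*} [MeasurableSpace α] (act : G → α → α) (μ : Measure α) : Prop :=
  ∀ s : Set α, MeasurableSet s → (∀ g : G, act g ⁻¹' s = s) → μ s = 0 ∨ μ sᶜ = 0

/-- Weak mixing of an action: the diagonal action on the square is ergodic. -/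
def WeaklyMixingAct {G α : Type*} [MeasurableSpace α] (act : G → α → α) (μ : Measure α) : Prop :=
  ErgodicAct (fun (g : G) (p : α × α) => (act g p.1, act g p.2)) (μ.prod μ)

/-- A measure is non-atomic (has no atoms) if every singleton is null. -/
def NonAtomicMeasure {α : Type*} [MeasurableSpace α] (μ : Measure α) : Prop :=
  ∀ x : α, μ {x} = 0

/-- The kernel of an IRS `θ` of `Γ`: the set of `γ ∈ Γ` with `θ(N_γ) = 1`.  (For a probability
measure this set is a subgroup; taking `Subgroup.closure` makes it a `Subgroup` on the nose.) -/
def kerIRS {Δ : Type*} [Group Δ] (Γ : Subgroup Δ) (θ : Measure (Subgroup ↥Γ)) : Subgroup ↥Γ :=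
  Subgroup.closure {x : ↥Γ | θ {Λ : Subgroup ↥Γ | x ∈ Λ} = 1}

/-- `core_Δ(ker(θ))`, viewed as a subgroup of `Δ`. -/
def coreKer {Δ : Type*} [Group Δ] (Γ : Subgroup Δ) (θ : Measure (Subgroup ↥Γ)) : Subgroup Δ :=
  ((kerIRS Γ θ).map Γ.subtype).normalCore

/-! ## The free group `F₂`, small cancellation notions -/

/-- The free group on two generators. -/
abbrev F2 : Type := FreeGroup Bool

/-- The first generator `a` of `F₂`. -/
def genA : F2 := FreeGroup.of true

/-- The second generator `b` of `F₂`. -/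
def genB : F2 := FreeGroup.of false

/-- The length `|x|` of the reduced word representing `x`. -/
def flen (x : F2) : ℕ := x.toWord.length

/-- `x` is cyclically reduced iff it has minimal length in its conjugacy class. -/
def CyclRed (x : F2) : Prop := ∀ g : F2, flen x ≤ flen (g * x * g⁻¹)

/-- The length `‖x‖` of the cyclically reduced word conjugate to `x`. -/
noncomputable def cyclen (x : F2) : ℕ := sInf (Set.range fun g : F2 => flen (g * x * g⁻¹))

/-- `u` is an initial segment (prefix) of the reduced word of `x`. -/
def IsInitSeg (u x : F2) : Prop := ∃ v : F2, x = u * v ∧ flen x = flen u + flen v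

/-- `S̃`: the set of all cyclically reduced cyclic conjugates of the words in `S` and of their
inverses.  (The cyclically reduced cyclic conjugates of a word `s` are exactly the cyclically
reduced elements of the conjugacy class of `s`.) -/
def tildeSet (S : Set F2) : Set F2 :=
  {y : F2 | CyclRed y ∧ ∃ s ∈ S, IsConj s y ∨ IsConj s⁻¹ y}

/-- The `C'(1/6)` small cancellation property for a set of words `S ⊆ F₂`. -/
def C'sixth (S : Set F2) : Prop :=
  ∀ x ∈ tildeSet S, ∀ y ∈ tildeSet S, x ≠ y →
    ∀ u : F2, IsInitSeg u x → IsInitSeg u y → 6 * flen u < min (flen x) (flen y)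

/-- The word `w = a b a² b² ⋯ aⁿ bⁿ`. -/
def wordW (n : ℕ) : F2 :=
  ((List.range n).map (fun i => genA ^ (i + 1) * genB ^ (i + 1))).prod

/-- The group of inner automorphisms of `F₂`, as a subgroup of `Aut(F₂)`;
this is the image of `F₂` in `Aut(F₂)`, identified with `F₂` itself. -/
def innerF2 : Subgroup (MulAut F2) := (MulAut.conj : F2 →* MulAut F2).range


set_option linter.all false


/-! ### Part 0: the tree metric -/

/-- Length of longest common prefix. -/
def lcp : List (Bool × Bool) → List (Bool × Bool) → ℕ
  | x :: xs, y :: ys => if x = y then lcp xs ys + 1 else 0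
  | _, _ => 0

lemma lcp_nil_left (l) : lcp [] l = 0 := by cases l <;> rfl
lemma lcp_nil_right (l) : lcp l [] = 0 := by cases l <;> rfl

lemma lcp_ultra : ∀ p q r : List (Bool × Bool), lcp p r ≤ lcp p q ∨ lcp r q ≤ lcp p q
  | [], q, r => by left; simp [lcp_nil_left]
  | p, [], r => by right; simp [lcp_nil_right]
  | p, q, [] => by left; simp [lcp_nil_right]
  | x :: xs, y :: ys, z :: zs => by
    simp only [lcp]
    have := lcp_ultra xs ys zs
    by_cases h1 : x = y <;> by_cases h2 : x = z <;> by_cases h3 : z = y <;> simp_all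

lemma lcp_comm : ∀ p q : List (Bool × Bool), lcp p q = lcp q p
  | [], q => by simp [lcp_nil_left, lcp_nil_right]
  | p, [] => by simp [lcp_nil_left, lcp_nil_right]
  | x :: xs, y :: ys => by
    simp only [lcp]
    rw [lcp_comm xs ys]
    by_cases h : x = y
    · simp [h]
    · simp [h, Ne.symm h]

lemma lcp_le_left : ∀ p q : List (Bool × Bool), lcp p q ≤ p.length
  | [], q => by simp [lcp_nil_left]
  | p, [] => by simp [lcp_nil_right]
  | x :: xs, y :: ys => by
    simp only [lcp]
    have := lcp_le_left xs ys
    split_ifs <;> simp <;> omega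

lemma flen_mk_of_reduced {L : List (Bool × Bool)} (h : FreeGroup.IsReduced L) :
    flen (FreeGroup.mk L) = L.length := by
  unfold flen; rw [FreeGroup.toWord_mk, h.reduce_eq]

lemma flen_lcp_aux : ∀ L M : List (Bool × Bool), FreeGroup.IsReduced L → FreeGroup.IsReduced M →
    flen ((FreeGroup.mk L)⁻¹ * FreeGroup.mk M) + 2 * lcp L M = L.length + M.length
  | [], M, _, hM => by
    rw [lcp_nil_left]
    have : (FreeGroup.mk ([] : List (Bool × Bool))) = 1 := rfl
    rw [this]; simp [flen_mk_of_reduced hM]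
  | L, [], hL, _ => by
    rw [lcp_nil_right]
    have : (FreeGroup.mk ([] : List (Bool × Bool))) = 1 := rfl
    rw [this]
    simp only [mul_one]
    have := flen_mk_of_reduced hL
    unfold flen at *
    rw [FreeGroup.toWord_inv, FreeGroup.invRev_length]; simpa using this
  | x :: xs, y :: ys, hL, hM => by
    by_cases h : x = y
    · subst h
      have e1 : ∀ l, (FreeGroup.mk (x :: l)) = FreeGroup.mk [x] * FreeGroup.mk l := by
        intro l; simp [FreeGroup.mul_mk]
      have := flen_lcp_aux xs ys (List.IsChain.tail hL) (List.IsChain.tail hM)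
      rw [e1 xs, e1 ys]
      simp only [lcp, if_true, List.length_cons]
      have e : (FreeGroup.mk [x] * FreeGroup.mk xs)⁻¹ * (FreeGroup.mk [x] * FreeGroup.mk ys)
        = (FreeGroup.mk xs)⁻¹ * FreeGroup.mk ys := by group
      rw [e]; omega
    · simp only [lcp, h, if_false]
      rw [FreeGroup.inv_mk, FreeGroup.mul_mk, flen_mk_of_reduced]
      · simp
      · unfold FreeGroup.IsReduced
        rw [List.isChain_append]
        refine ⟨?_, hM, ?_⟩
        · have h2 : FreeGroup.IsReduced (FreeGroup.invRev (x :: xs)) := by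
            rw [FreeGroup.isReduced_iff_reduce_eq, FreeGroup.reduce_invRev, hL.reduce_eq]
          exact h2
        · intro u hu v hv
          simp [FreeGroup.invRev] at hu hv
          subst hu hv
          intro h1
          simp at h1 ⊢
          by_contra h3
          apply h
          ext
          · exact h1
          · rcases x with ⟨_, b⟩; rcases y with ⟨_, c⟩; cases b <;> cases c <;> simp_all

/-- word metric -/
def d (p q : F2) : ℕ := flen (p⁻¹ * q)

lemma d_lcp (p q : F2) : d p q + 2 * lcp p.toWord q.toWord = flen p + flen q := by
  have := flen_lcp_aux p.toWord q.toWord FreeGroup.isReduced_toWord FreeGroup.isReduced_toWord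
  rw [FreeGroup.mk_toWord, FreeGroup.mk_toWord] at this
  exact this

lemma flen_one : flen 1 = 0 := by simp [flen]
lemma flen_inv (x : F2) : flen x⁻¹ = flen x := FreeGroup.norm_inv_eq
lemma flen_mul_le (x y : F2) : flen (x * y) ≤ flen x + flen y := FreeGroup.norm_mul_le x y
lemma flen_eq_zero {x : F2} : flen x = 0 ↔ x = 1 := FreeGroup.norm_eq_zero
lemma flen_pos {x : F2} (h : x ≠ 1) : 0 < flen x := Nat.pos_of_ne_zero (fun h' => h (flen_eq_zero.1 h'))
lemma d_one (q : F2) : d 1 q = flen q := by simp [d]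
lemma d_one_right (q : F2) : d q 1 = flen q := by simp [d, flen_inv]
lemma d_comm (p q : F2) : d p q = d q p := by
  unfold d; rw [← flen_inv]; simp
lemma d_self (p : F2) : d p p = 0 := by simp [d, flen_one]
lemma d_mul_left (g p q : F2) : d (g * p) (g * q) = d p q := by
  unfold d; congr 1; group
lemma d_triangle (p q r : F2) : d p r ≤ d p q + d q r := by
  unfold d
  have : p⁻¹ * r = (p⁻¹ * q) * (q⁻¹ * r) := by group
  rw [this]; exact flen_mul_le _ _
lemma d_eq_zero {p q : F2} (h : d p q = 0) : p = q := by
  have := flen_eq_zero.1 h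
  exact (inv_mul_eq_one.1 this)

lemma four_pt1 (q r s : F2) : d 1 q + d r s ≤ d 1 r + d q s ∨ d 1 q + d r s ≤ d 1 s + d q r := by
  simp only [d_one]
  have h1 := d_lcp r s
  have h2 := d_lcp q s
  have h3 := d_lcp q r
  have := lcp_ultra r.toWord s.toWord q.toWord
  rw [lcp_comm r.toWord q.toWord] at this
  omega

lemma four_pt (p q r s : F2) : d p q + d r s ≤ d p r + d q s ∨ d p q + d r s ≤ d p s + d q r := by
  have := four_pt1 (p⁻¹ * q) (p⁻¹ * r) (p⁻¹ * s)
  have e : ∀ x, d 1 (p⁻¹ * x) = d p x := by intro x; simp [d]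
  simpa only [e, d_mul_left] using this

lemma d_parity (p q : F2) : (d p q) % 2 = (flen p + flen q) % 2 := by
  have := d_lcp p q; omega

lemma flen_mul_parity (p q : F2) : (flen (p * q)) % 2 = (flen p + flen q) % 2 := by
  have := d_parity p⁻¹ q
  rw [flen_inv] at this; rw [← this]; simp [d]

/-- betweenness -/
def Btw (p v q : F2) : Prop := d p v + d v q = d p q

lemma toWord_mul_of_len {g h : F2} (e : flen (g * h) = flen g + flen h) :
    (g * h).toWord = g.toWord ++ h.toWord := by
  apply (FreeGroup.toWord_mul_sublist g h).eq_of_length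
  simpa [flen] using e

lemma toWord_mk_reduced {L : List (Bool × Bool)} (h : FreeGroup.IsReduced L) :
    (FreeGroup.mk L).toWord = L := by
  rw [FreeGroup.toWord_mk, h.reduce_eq]

lemma exists_initial (g : F2) (k : ℕ) (hk : k ≤ flen g) :
    ∃ p q : F2, g = p * q ∧ flen p = k ∧ flen g = flen p + flen q := by
  have hr : FreeGroup.IsReduced g.toWord := FreeGroup.isReduced_toWord
  have h1 : FreeGroup.IsReduced (g.toWord.take k) := List.IsChain.take hr k
  have h2 : FreeGroup.IsReduced (g.toWord.drop k) := List.IsChain.drop hr k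
  refine ⟨FreeGroup.mk (g.toWord.take k), FreeGroup.mk (g.toWord.drop k), ?_, ?_, ?_⟩
  · rw [FreeGroup.mul_mk, List.take_append_drop, FreeGroup.mk_toWord]
  · rw [flen_mk_of_reduced h1, List.length_take]; unfold flen at hk; omega
  · rw [flen_mk_of_reduced h1, flen_mk_of_reduced h2, List.length_take, List.length_drop]
    unfold flen at *; omega

lemma exists_mid (p q : F2) (k : ℕ) (hk : k ≤ d p q) : ∃ v, Btw p v q ∧ d p v = k := by
  obtain ⟨x, y, h1, h2, h3⟩ := exists_initial (p⁻¹ * q) k hk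
  refine ⟨p * x, ?_, ?_⟩
  · unfold Btw d
    have e1 : p⁻¹ * (p * x) = x := by group
    have e2 : (p * x)⁻¹ * q = y := by
      have : (p * x)⁻¹ * q = x⁻¹ * (p⁻¹ * q) := by group
      rw [this, h1]; group
    rw [e1, e2, h3]
  · unfold d
    have e1 : p⁻¹ * (p * x) = x := by group
    rw [e1, h2]

lemma Btw.unique {p q v v' : F2} (h : Btw p v q) (h' : Btw p v' q) (e : d p v = d p v') : v = v' := by
  apply d_eq_zero
  have := four_pt p q v v'
  have h1 := d_comm q v
  have h2 := d_comm q v'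
  unfold Btw at *
  omega

lemma Btw.mul_left {p v q : F2} (g : F2) (h : Btw p v q) : Btw (g * p) (g * v) (g * q) := by
  unfold Btw at *; simpa only [d_mul_left] using h

lemma Btw.symm {p v q : F2} (h : Btw p v q) : Btw q v p := by
  unfold Btw at *
  rw [d_comm q v, d_comm v p, d_comm q p]; omega

lemma initial_eq {x y p q : F2} (hx : Btw 1 p x) (hy : Btw 1 q y) (e : flen p = flen q)
    (h : 2 * flen p + d x y ≤ flen x + flen y) : p = q := by
  apply d_eq_zero
  unfold Btw at *
  have h4 := four_pt 1 y p q
  have h5 := four_pt 1 x p q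
  have h6 := four_pt x y p q
  have h7 := four_pt 1 x y p
  have h8 := four_pt 1 x y q
  have h9 := four_pt 1 y x p
  have h10 := four_pt 1 y x q
  simp only [d_one] at *
  have c1 := d_comm x p
  have c2 := d_comm y p
  have c3 := d_comm x q
  have c4 := d_comm y q
  have c5 := d_comm x y
  omega

lemma btw_mul {p q : F2} : Btw 1 p (p * q) ↔ flen (p * q) = flen p + flen q := by
  unfold Btw
  have : d p (p * q) = flen q := by simp [d]
  rw [d_one, d_one, this]; exact eq_comm

lemma flen_sq_gt {y : F2} (h : y ≠ 1) : flen y < flen (y * y) := by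
  by_contra hle
  push Not at hle
  have hpos := flen_pos h
  have par := flen_mul_parity y y
  obtain ⟨p, q, hs, hl, ha⟩ := exists_initial y ((flen y + 1)/ 2) (by omega)
  obtain ⟨p', q', hs', hl', ha'⟩ := exists_initial y⁻¹ ((flen y + 1) / 2) (by rw [flen_inv]; omega)
  have e3 : d y y⁻¹ = flen (y * y) := by rw [d_comm]; simp [d]
  have hpp : p = p' := by
    apply initial_eq (x := y) (y := y⁻¹)
    · rw [hs, btw_mul, ← hs, ha]
    · rw [hs', btw_mul, ← hs', ha']
    · omega
    · rw [flen_inv]; omega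
  subst hpp
  have e4 : y = q'⁻¹ * p⁻¹ := by rw [← mul_inv_rev, ← hs']; simp
  have e5 : y⁻¹ = q⁻¹ * p⁻¹ := by rw [← mul_inv_rev, ← hs]
  rw [flen_inv] at ha'
  have : q'⁻¹ = q⁻¹ := by
    apply initial_eq (x := y) (y := y⁻¹)
    · rw [e4, btw_mul, ← e4, flen_inv, flen_inv]; omega
    · rw [e5, btw_mul, ← e5, flen_inv, flen_inv, flen_inv]; omega
    · rw [flen_inv, flen_inv]; omega
    · rw [flen_inv, flen_inv]; omega
  have hy : y = y⁻¹ := by rw [e5, ← this, ← e4]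
  have h2 : y ^ 2 = 1 := by rw [pow_two]; nth_rewrite 2 [hy]; simp
  exact h ((pow_eq_one_iff_left (by norm_num)).1 h2)


lemma cyclRed_sq {x : F2} (h : CyclRed x) : flen (x * x) = 2 * flen x := by
  by_contra hne
  have par := flen_mul_parity x x
  have hle := flen_mul_le x x
  have hx : x ≠ 1 := by
    rintro rfl; simp [flen_one] at hne
  have hsq := flen_sq_gt hx
  have hpos := flen_pos hx
  obtain ⟨p, q, hs, hl, ha⟩ := exists_initial x 1 (by omega)
  obtain ⟨p', q', hs', hl', ha'⟩ := exists_initial x⁻¹ 1 (by rw [flen_inv]; omega)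
  have e3 : d x x⁻¹ = flen (x * x) := by rw [d_comm]; simp [d]
  have hpp : p = p' := by
    apply initial_eq (x := x) (y := x⁻¹)
    · rw [hs, btw_mul, ← hs, ha]
    · rw [hs', btw_mul, ← hs', ha']
    · omega
    · rw [flen_inv]; omega
  subst hpp
  rw [flen_inv] at ha'
  have h4 := four_pt 1 x p (x * p)
  have hc := h p⁻¹
  have e1 : d p (x * p) = flen (p⁻¹ * x * p⁻¹⁻¹) := by simp [d, mul_assoc]
  have e2 : d x (x * p) = flen p := by simp [d]
  have e4 : d 1 (x * p) = flen q' := by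
    rw [d_one, ← flen_inv, mul_inv_rev, hs']; simp
  have e5 : d x p = flen q := by rw [d_comm, hs]; simp [d]
  simp only [d_one] at h4 e4
  omega

lemma flen_pow {x : F2} (h : flen (x * x) = 2 * flen x) (k : ℕ) : flen (x ^ k) = k * flen x := by
  induction k with
  | zero => simp [flen_one]
  | succ k ih =>
    rcases Nat.eq_zero_or_pos (flen x) with h0 | h0
    · have := flen_eq_zero.1 h0
      subst this; simp [flen_one]
    rcases k with _ | _ | k
    · simp
    · simp only [zero_add, pow_one] at *; rw [show (1+1) = 2 from rfl, pow_two, h]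
    · have h4 := four_pt 1 (x ^ (k+2)) x (x ^ (k+3))
      have e1 : d x (x ^ (k+3)) = (k+2) * flen x := by
        rw [show x ^ (k+3) = x * x ^ (k+2) from pow_succ' _ _]
        simp only [d, inv_mul_cancel_left]; exact ih
      have e2 : d (x ^ (k+2)) (x ^ (k+3)) = flen x := by
        rw [show x ^ (k+3) = x ^ (k+2) * x from pow_succ _ _]; simp [d]
      have e3 : d (x ^ (k+2)) x ≤ (k+1) * flen x := by
        rw [d_comm, show x ^ (k+2) = x * x ^ (k+1) from pow_succ' _ _]
        simp only [d, inv_mul_cancel_left]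
        clear h4 e1 e2 ih
        induction k with
        | zero => simp
        | succ k ih2 =>
          rw [pow_succ]; have := flen_mul_le (x^(k+1)) x
          have e : (k+1+1)*flen x = (k+1)*flen x + flen x := by ring
          omega
      have e4 : flen (x ^ (k+3)) ≤ (k+2) * flen x + flen x := by
        rw [pow_succ]; have := flen_mul_le (x^(k+2)) x
        rw [ih] at this; exact this
      simp only [d_one] at h4
      rw [ih] at h4
      show flen (x ^ (k+3)) = (k+3) * flen x
      have r1 : (k+2) * flen x = k * flen x + 2 * flen x := by ring
      have r4 : (k+1+1) * flen x = k * flen x + 2 * flen x := by ring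
      have r2 : (k+1) * flen x = k * flen x + flen x := by ring
      have r3 : (k+3) * flen x = k * flen x + 3 * flen x := by ring
      omega

/-- positive words -/
def PosW (x : F2) : Prop := ∀ l ∈ x.toWord, l.2 = true

lemma isReduced_of_pos {L : List (Bool × Bool)} (h : ∀ l ∈ L, l.2 = true) :
    FreeGroup.IsReduced L := by
  induction L with
  | nil => simp
  | cons x L ih =>
    cases L with
    | nil => simp
    | cons y L =>
      rw [FreeGroup.isReduced_cons_cons]
      refine ⟨fun _ => ?_, ih (fun l hl => h l (List.mem_cons_of_mem _ hl))⟩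
      rw [h x (by simp), h y (by simp)]

lemma PosW.toWord_mul {x y : F2} (hx : PosW x) (hy : PosW y) :
    (x * y).toWord = x.toWord ++ y.toWord := by
  rw [FreeGroup.toWord_mul]
  apply FreeGroup.IsReduced.reduce_eq
  apply isReduced_of_pos
  intro l hl
  rcases List.mem_append.1 hl with h | h
  · exact hx l h
  · exact hy l h

lemma PosW.mul {x y : F2} (hx : PosW x) (hy : PosW y) : PosW (x * y) := by
  intro l hl
  rw [hx.toWord_mul hy] at hl
  rcases List.mem_append.1 hl with h | h
  · exact hx l h
  · exact hy l h

lemma PosW.flen_mul {x y : F2} (hx : PosW x) (hy : PosW y) : flen (x * y) = flen x + flen y := by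
  unfold flen; rw [hx.toWord_mul hy, List.length_append]

lemma PosW.one : PosW 1 := by intro l hl; simp at hl
lemma PosW.of (c : Bool) : PosW (FreeGroup.of c) := by
  intro l hl; rw [FreeGroup.toWord_of] at hl; simp at hl; rw [hl]

lemma PosW.pow {x : F2} (hx : PosW x) (k : ℕ) : PosW (x ^ k) := by
  induction k with
  | zero => simpa using PosW.one
  | succ k ih => rw [pow_succ]; exact ih.mul hx

lemma PosW.flen_pow {x : F2} (hx : PosW x) (k : ℕ) : flen (x ^ k) = k * flen x :=
  IRSPaper.flen_pow (by rw [hx.flen_mul hx]; ring) k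

/-- the element given by a letter -/
def lt (x : Bool × Bool) : F2 := FreeGroup.mk [x]

lemma lt_true (c : Bool) : lt (c, true) = FreeGroup.of c := rfl
lemma lt_false (c : Bool) : lt (c, false) = (FreeGroup.of c)⁻¹ := by
  simp [lt, FreeGroup.of, FreeGroup.inv_mk, FreeGroup.invRev]
lemma flen_lt (x : Bool × Bool) : flen (lt x) = 1 := by
  unfold lt; rw [flen_mk_of_reduced (by simp)]; rfl
lemma mk_cons (x : Bool × Bool) (l) : FreeGroup.mk (x :: l) = lt x * FreeGroup.mk l := by
  simp [lt, FreeGroup.mul_mk]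

lemma lt_inv (c s : Bool) : (lt (c, s))⁻¹ = lt (c, !s) := by
  cases s <;> simp [lt_true, lt_false]

lemma flen_genA : flen genA = 1 := flen_lt (true, true)
lemma flen_genB : flen genB = 1 := flen_lt (false, true)

lemma exists_lt {x : F2} (h : flen x = 1) : ∃ l, x = lt l := by
  unfold flen at h
  obtain ⟨l, hl⟩ := List.length_eq_one_iff.1 h
  exact ⟨l, by rw [lt, ← hl, FreeGroup.mk_toWord]⟩

lemma lt_inj {l m : Bool × Bool} (h : lt l = lt m) : l = m := by
  have : (lt l).toWord = (lt m).toWord := by rw [h]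
  unfold lt at this
  rw [toWord_mk_reduced (by simp), toWord_mk_reduced (by simp)] at this
  simpa using this

lemma flen_one_cases {x : F2} (h : flen x = 1) : x = genA ∨ x = genA⁻¹ ∨ x = genB ∨ x = genB⁻¹ := by
  obtain ⟨⟨c, s⟩, rfl⟩ := exists_lt h
  cases c <;> cases s <;> simp [lt_true, lt_false, genA, genB]

lemma genA_ne_genB : genA ≠ genB := by decide
lemma genA_ne_genB_inv : genA ≠ genB⁻¹ := by decide

lemma aut_ext {η η' : MulAut F2} (h1 : η genA = η' genA) (h2 : η genB = η' genB) : η = η' := by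
  have : η.toMonoidHom = η'.toMonoidHom := by
    ext c
    cases c
    · exact h2
    · exact h1
  ext x
  exact DFunLike.congr_fun this x

lemma genA_ne_one : genA ≠ 1 := by decide
lemma genB_ne_one : genB ≠ 1 := by decide

/-- hom from images of generators -/
def homOf (x y : F2) : F2 →* F2 := FreeGroup.lift (fun c => if c then x else y)
lemma homOf_a (x y : F2) : homOf x y genA = x := by simp [homOf, genA]
lemma homOf_b (x y : F2) : homOf x y genB = y := by simp [homOf, genB]
lemma hom_ext {f g : F2 →* F2} (h1 : f genA = g genA) (h2 : f genB = g genB) : f = g := by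
    ext c
    cases c
    · exact h2
    · exact h1

/-- swap -/
def sw : MulAut F2 := MonoidHom.toMulEquiv (homOf genB genA) (homOf genB genA)
  (hom_ext (by simp [homOf_a, homOf_b]) (by simp [homOf_a, homOf_b]))
  (hom_ext (by simp [homOf_a, homOf_b]) (by simp [homOf_a, homOf_b]))
/-- flip a -/
def ta : MulAut F2 := MonoidHom.toMulEquiv (homOf genA⁻¹ genB) (homOf genA⁻¹ genB)
  (hom_ext (by simp [homOf_a, homOf_b]) (by simp [homOf_a, homOf_b]))
  (hom_ext (by simp [homOf_a, homOf_b]) (by simp [homOf_a, homOf_b]))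
/-- flip b -/
def tb : MulAut F2 := MonoidHom.toMulEquiv (homOf genA genB⁻¹) (homOf genA genB⁻¹)
  (hom_ext (by simp [homOf_a, homOf_b]) (by simp [homOf_a, homOf_b]))
  (hom_ext (by simp [homOf_a, homOf_b]) (by simp [homOf_a, homOf_b]))
/-- Dehn twist -/
def LL : MulAut F2 := MonoidHom.toMulEquiv (homOf genA (genA * genB)) (homOf genA (genA⁻¹ * genB))
  (hom_ext (by simp [homOf_a, homOf_b]) (by simp [homOf_a, homOf_b]))
  (hom_ext (by simp [homOf_a, homOf_b]) (by simp [homOf_a, homOf_b]))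

@[simp] lemma sw_a : sw genA = genB := by simp [sw, homOf_a, homOf_b]
@[simp] lemma sw_b : sw genB = genA := by simp [sw, homOf_a, homOf_b]
@[simp] lemma ta_a : ta genA = genA⁻¹ := by simp [ta, homOf_a, homOf_b]
@[simp] lemma ta_b : ta genB = genB := by simp [ta, homOf_a, homOf_b]
@[simp] lemma tb_a : tb genA = genA := by simp [tb, homOf_a, homOf_b]
@[simp] lemma tb_b : tb genB = genB⁻¹ := by simp [tb, homOf_a, homOf_b]
@[simp] lemma LL_a : LL genA = genA := by simp [LL, homOf_a, homOf_b]
@[simp] lemma LL_b : LL genB = genA * genB := by simp [LL, homOf_a, homOf_b]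
@[simp] lemma LLi_a : LL⁻¹ genA = genA := by
  rw [MulAut.inv_apply, MulEquiv.symm_apply_eq, LL_a]
@[simp] lemma LLi_b : LL⁻¹ genB = genA⁻¹ * genB := by
  rw [MulAut.inv_apply, MulEquiv.symm_apply_eq]; simp

/-- signed permutations -/
def Sgn (ε : MulAut F2) : Prop := flen (ε genA) = 1 ∧ flen (ε genB) = 1

lemma Sgn.le {ε : MulAut F2} (h : Sgn ε) (z : F2) : flen (ε z) ≤ flen z := by
  have key : ∀ L : List (Bool × Bool), flen (ε (FreeGroup.mk L)) ≤ L.length := by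
    intro L
    induction L with
    | nil => 
      have : (FreeGroup.mk ([] : List (Bool × Bool))) = 1 := rfl
      rw [this]; simp [flen_one]
    | cons x L ih =>
      rw [mk_cons, map_mul]
      have := flen_mul_le (ε (lt x)) (ε (FreeGroup.mk L))
      have h1 : flen (ε (lt x)) = 1 := by
        rcases x with ⟨c, s⟩
        have ha := h.1
        have hb := h.2
        unfold genA at ha
        unfold genB at hb
        cases c <;> cases s <;> simp [lt_true, lt_false, flen_inv, ha, hb]
      rw [List.length_cons]; omega
  have := key z.toWord
  rwa [FreeGroup.mk_toWord] at this

lemma Sgn.cases {ε : MulAut F2} (h : Sgn ε) : ε = 1 ∨ ε = ta ∨ ε = tb ∨ ε = ta * tb ∨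
    ε = sw ∨ ε = sw * ta ∨ ε = sw * tb ∨ ε = sw * (ta * tb) := by
  have hne : ε genA ≠ ε genB := fun e => genA_ne_genB (ε.injective e)
  have hne' : ε genA ≠ (ε genB)⁻¹ := fun e => genA_ne_genB_inv (ε.injective (by rw [e, map_inv]))
  have key : ∀ x y, ε genA = x → ε genB = y → ∀ δ : MulAut F2, δ genA = x → δ genB = y → ε = δ :=
    fun x y h1 h2 δ h3 h4 => aut_ext (h1.trans h3.symm) (h2.trans h4.symm)
  rcases flen_one_cases h.1 with h1 | h1 | h1 | h1 <;>
  rcases flen_one_cases h.2 with h2 | h2 | h2 | h2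
  all_goals first
    | (exfalso; rw [h1, h2] at hne hne'; simp at hne hne'; done)
    | skip
  · left; exact key _ _ h1 h2 _ (by simp) (by simp)
  · right; right; left; exact key _ _ h1 h2 _ (by simp) (by simp)
  · right; left; exact key _ _ h1 h2 _ (by simp) (by simp)
  · right; right; right; left; exact key _ _ h1 h2 _ (by simp) (by simp)
  · right; right; right; right; left; exact key _ _ h1 h2 _ (by simp) (by simp)
  · right; right; right; right; right; right; left; exact key _ _ h1 h2 _ (by simp) (by simp)
  · right; right; right; right; right; left; exact key _ _ h1 h2 _ (by simp) (by simp)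
  · right; right; right; right; right; right; right; exact key _ _ h1 h2 _ (by simp) (by simp)

lemma sw_sw : sw * sw = 1 := aut_ext (by simp) (by simp)
lemma ta_ta : ta * ta = 1 := aut_ext (by simp) (by simp)
lemma tb_tb : tb * tb = 1 := aut_ext (by simp) (by simp)

lemma Sgn.mul {ε δ : MulAut F2} (h : Sgn ε) (h' : Sgn δ) : Sgn (ε * δ) := by
  constructor
  · have h1 := h.le (δ genA)
    have h2 := h'.1
    have : (ε * δ) genA ≠ 1 := by
      intro e; exact genA_ne_one ((ε * δ).injective (by rw [e, map_one]))
    have := flen_pos this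
    simp only [MulAut.mul_apply] at *
    omega
  · have h1 := h.le (δ genB)
    have h2 := h'.2
    have : (ε * δ) genB ≠ 1 := by
      intro e; exact genB_ne_one ((ε * δ).injective (by rw [e, map_one]))
    have := flen_pos this
    simp only [MulAut.mul_apply] at *
    omega

lemma sgn_one : Sgn 1 := ⟨flen_genA, flen_genB⟩
lemma sgn_sw : Sgn sw := ⟨by rw [sw_a, flen_genB], by rw [sw_b, flen_genA]⟩
lemma sgn_ta : Sgn ta := ⟨by rw [ta_a, flen_inv, flen_genA], by rw [ta_b, flen_genB]⟩
lemma sgn_tb : Sgn tb := ⟨by rw [tb_a, flen_genA], by rw [tb_b, flen_inv, flen_genB]⟩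

lemma Sgn.inv {ε : MulAut F2} (h : Sgn ε) : Sgn ε⁻¹ := by
  have i1 : sw⁻¹ = sw := inv_eq_of_mul_eq_one_left sw_sw
  have i2 : ta⁻¹ = ta := inv_eq_of_mul_eq_one_left ta_ta
  have i3 : tb⁻¹ = tb := inv_eq_of_mul_eq_one_left tb_tb
  have := sgn_ta
  have := sgn_tb
  have := sgn_sw
  have := sgn_one
  rcases h.cases with h | h | h | h | h | h | h | h <;> subst h <;>
    simp only [mul_inv_rev, inv_one, i1, i2, i3] <;>
    first | assumption | (apply Sgn.mul <;> first | assumption | (apply Sgn.mul <;> assumption))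

lemma Sgn.iso {ε : MulAut F2} (h : Sgn ε) (z : F2) : flen (ε z) = flen z := by
  apply le_antisymm (h.le z)
  have := h.inv.le (ε z)
  simpa using this


/-! ### Normal form of automorphisms -/

/-- positive automorphisms -/
inductive PosA : MulAut F2 → Prop
  | one : PosA 1
  | swap (φ : MulAut F2) : PosA φ → PosA (φ * sw)
  | twist (φ : MulAut F2) : PosA φ → PosA (φ * LL)

/-- normal forms -/
def NF (η : MulAut F2) : Prop :=
  ∃ (g : F2) (σ φ ε : MulAut F2), Sgn σ ∧ PosA φ ∧ Sgn ε ∧ η = MulAut.conj g * σ * φ * ε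

lemma aut_conj (η : MulAut F2) (g : F2) : η * MulAut.conj g = MulAut.conj (η g) * η := by
  ext x; simp

lemma NF.conj {η : MulAut F2} (h : NF η) (g : F2) : NF (MulAut.conj g * η) := by
  obtain ⟨g', σ, φ, ε, h1, h2, h3, rfl⟩ := h
  exact ⟨g * g', σ, φ, ε, h1, h2, h3, by simp only [map_mul, mul_assoc]⟩

lemma NF.sgn_left {η : MulAut F2} (h : NF η) {δ : MulAut F2} (hd : Sgn δ) : NF (δ * η) := by
  obtain ⟨g', σ, φ, ε, h1, h2, h3, rfl⟩ := h
  refine ⟨δ g', δ * σ, φ, ε, hd.mul h1, h2, h3, ?_⟩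
  simp only [← mul_assoc, ← aut_conj]

lemma NF.sgn_right {η : MulAut F2} (h : NF η) {δ : MulAut F2} (hd : Sgn δ) : NF (η * δ) := by
  obtain ⟨g', σ, φ, ε, h1, h2, h3, rfl⟩ := h
  exact ⟨g', σ, φ, ε * δ, h1, h2, h3.mul hd, by simp only [mul_assoc]⟩

lemma PosA.nf {φ : MulAut F2} (h : PosA φ) : NF φ :=
  ⟨1, 1, φ, 1, sgn_one, h, sgn_one, by simp⟩

@[simp] lemma LLs_a : (MulEquiv.symm LL) genA = genA := LLi_a
@[simp] lemma LLs_b : (MulEquiv.symm LL) genB = genA⁻¹ * genB := LLi_b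
lemma LLinv_eq : LL⁻¹ = ta * LL * ta := aut_ext (by simp) (by simp)
lemma LsL : LL * sw * LL⁻¹ = MulAut.conj genB⁻¹ * (sw * LL * sw) * tb :=
  aut_ext (by simp) (by simp)

lemma PosA.LLinv {φ : MulAut F2} (h : PosA φ) : NF (φ * LL⁻¹) := by
  have base : NF LL⁻¹ := by
    rw [LLinv_eq]
    have := (PosA.twist 1 PosA.one).nf.sgn_left sgn_ta
    simpa using this.sgn_right sgn_ta
  -- strengthen: both φ L⁻¹ and φ s L⁻¹
  have key : ∀ φ, PosA φ → NF (φ * LL⁻¹) ∧ NF (φ * sw * LL⁻¹) := by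
    intro φ h
    induction h with
    | one => exact ⟨by simpa using base, by simpa using base.sgn_left sgn_sw⟩
    | swap φ hφ ih => exact ⟨ih.2, by rw [mul_assoc φ, sw_sw, mul_one]; exact ih.1⟩
    | twist φ hφ ih =>
      refine ⟨by simpa using hφ.nf, ?_⟩
      rw [mul_assoc φ, mul_assoc φ, LsL]
      have e : φ * (MulAut.conj genB⁻¹ * (sw * LL * sw) * tb)
        = MulAut.conj (φ genB⁻¹) * (φ * sw * LL * sw * tb) := by
        simp only [← mul_assoc, ← aut_conj]
      rw [e]
      exact (NF.sgn_right (((hφ.swap).twist).swap).nf sgn_tb).conj _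
  exact (key φ h).1

lemma sgn_LLinv {φ ε : MulAut F2} (hφ : PosA φ) (h : Sgn ε) : NF (φ * ε * LL⁻¹) := by
  have key : ∀ φ, PosA φ → NF (φ * LL⁻¹) ∧ NF (φ * ta * LL⁻¹) ∧ NF (φ * tb * LL⁻¹) ∧
      NF (φ * (ta * tb) * LL⁻¹) := by
    intro φ hφ
    refine ⟨hφ.LLinv, ?_, ?_, ?_⟩
    · have e : ta * LL⁻¹ = LL * ta := aut_ext (by simp) (by simp)
      rw [mul_assoc, e, ← mul_assoc]
      exact hφ.twist.nf.sgn_right sgn_ta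
    · have e : tb * LL⁻¹ = MulAut.conj genA⁻¹ * LL * tb := aut_ext (by simp) (by simp [mul_assoc])
      rw [mul_assoc, e, ← mul_assoc, ← mul_assoc, aut_conj, mul_assoc, mul_assoc, ← mul_assoc φ]
      exact (hφ.twist.nf.sgn_right sgn_tb).conj _
    · have e : ta * tb * LL⁻¹ = MulAut.conj genA * LL⁻¹ * (ta * tb) :=
        aut_ext (by simp) (by simp [mul_assoc])
      rw [mul_assoc, e, ← mul_assoc φ (_ * _), ← mul_assoc φ (MulAut.conj genA), aut_conj, mul_assoc, mul_assoc, ← mul_assoc φ]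
      exact (hφ.LLinv.sgn_right (sgn_ta.mul sgn_tb)).conj _
  obtain ⟨k1, k2, k3, k4⟩ := key φ hφ
  obtain ⟨k5, k6, k7, k8⟩ := key _ hφ.swap
  rcases h.cases with h | h | h | h | h | h | h | h <;> subst h <;> 
    simp only [mul_assoc, mul_one, one_mul] at * <;> assumption

lemma NF.LLinv {η : MulAut F2} (h : NF η) : NF (η * LL⁻¹) := by
  obtain ⟨g', σ, φ, ε, h1, h2, h3, rfl⟩ := h
  have := ((sgn_LLinv h2 h3).sgn_left h1).conj g'
  simpa only [mul_assoc] using this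

/-- image of a letter -/
lemma lt_ne_one (x : Bool × Bool) : lt x ≠ 1 := by
  intro h; have := flen_lt x; rw [h, flen_one] at this; omega

/-- A reduced automorphism. -/
def Minl (η : MulAut F2) : Prop := ∀ (g : F2) (ε : MulAut F2), Sgn ε →
  flen (η genA) + flen (η genB) ≤ flen (g * η (ε genA) * g⁻¹) + flen (g * η (ε genA * ε genB) * g⁻¹)

lemma exists_sgn (c s s' : Bool) : ∃ ε, Sgn ε ∧ ε genA = lt (c, s) ∧ ε genB = lt (!c, s') := by
  have := sgn_ta
  have := sgn_tb
  have := sgn_sw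
  have := sgn_one
  cases c <;> cases s <;> cases s'
  · exact ⟨sw * (ta * tb), sgn_sw.mul (sgn_ta.mul sgn_tb), by simp [lt_false]; rfl, by simp [lt_false]; rfl⟩
  · exact ⟨sw * ta, sgn_sw.mul sgn_ta, by simp [lt_false]; rfl, by simp [lt_true]; rfl⟩
  · exact ⟨sw * tb, sgn_sw.mul sgn_tb, by simp [lt_true]; rfl, by simp [lt_false]; rfl⟩
  · exact ⟨sw, sgn_sw, by simp [lt_true]; rfl, by simp [lt_true]; rfl⟩
  · exact ⟨ta * tb, (sgn_ta.mul sgn_tb), by simp [lt_false]; rfl, by simp [lt_false]; rfl⟩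
  · exact ⟨ta, sgn_ta, by simp [lt_false]; rfl, by simp [lt_true]; rfl⟩
  · exact ⟨tb, sgn_tb, by simp [lt_true]; rfl, by simp [lt_false]; rfl⟩
  · exact ⟨1, sgn_one, by simp [lt_true]; rfl, by simp [lt_true]; rfl⟩

lemma flen_aut_lt (η : MulAut F2) (c s : Bool) :
    flen (η (lt (c, s))) = flen (η (lt (c, true))) := by
  cases s
  · rw [lt_false, lt_true, map_inv, flen_inv]
  · rfl

lemma tot_eq (η : MulAut F2) (c s s' : Bool) :
    flen (η (lt (c, s))) + flen (η (lt (!c, s'))) = flen (η genA) + flen (η genB) := by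
  rw [flen_aut_lt, flen_aut_lt η (!c)]
  cases c
  · show flen (η genB) + flen (η genA) = _
    ring
  · rfl

lemma Minl.basis {η : MulAut F2} (h : Minl η) (g : F2) (c s s' : Bool) :
    flen (η (lt (c, s))) + flen (η (lt (!c, s'))) ≤
    flen (g * η (lt (c, s)) * g⁻¹) + flen (g * (η (lt (c, s)) * η (lt (!c, s'))) * g⁻¹) := by
  obtain ⟨ε, h1, h2, h3⟩ := exists_sgn c s s'
  have := h g ε h1
  rw [h2, h3, map_mul] at this
  rw [tot_eq]; exact this

lemma Minl.le_right {η : MulAut F2} (h : Minl η) (c s s' : Bool) :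
    flen (η (lt (!c, s'))) ≤ flen (η (lt (c, s)) * η (lt (!c, s'))) := by
  have := h.basis 1 c s s'
  simp only [one_mul, inv_one, mul_one] at this
  omega

lemma Minl.le_left {η : MulAut F2} (h : Minl η) (c s s' : Bool) :
    flen (η (lt (c, s))) ≤ flen (η (lt (c, s)) * η (lt (!c, s'))) := by
  have := h.le_right (!c) (!s') (!s)
  rw [← lt_inv, ← lt_inv, map_inv, map_inv, ← mul_inv_rev, flen_inv, flen_inv, Bool.not_not] at this
  exact this

lemma aut_ne_one (η : MulAut F2) {x : F2} (h : x ≠ 1) : η x ≠ 1 := by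
  intro e; exact h (η.injective (by rw [e, map_one]))

/-- admissible consecutive letters -/
def Adm (l m : Bool × Bool) : Prop := l.1 = m.1 → l.2 = m.2

lemma Minl.le_left' {η : MulAut F2} (h : Minl η) {l m : Bool × Bool} (ha : Adm l m) :
    flen (η (lt l)) ≤ flen (η (lt l) * η (lt m)) := by
  rcases l with ⟨c, s⟩
  rcases m with ⟨c', s'⟩
  by_cases hc : c = c'
  · have := ha hc
    simp at this
    subst hc this
    exact (flen_sq_gt (aut_ne_one η (lt_ne_one _))).le
  · have : c' = !c := by cases c <;> cases c' <;> simp_all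
    subst this
    exact h.le_left c s s'

lemma Minl.le_right' {η : MulAut F2} (h : Minl η) {l m : Bool × Bool} (ha : Adm l m) :
    flen (η (lt m)) ≤ flen (η (lt l) * η (lt m)) := by
  rcases l with ⟨c, s⟩
  rcases m with ⟨c', s'⟩
  by_cases hc : c = c'
  · have := ha hc
    simp at this
    subst hc this
    exact (flen_sq_gt (aut_ne_one η (lt_ne_one _))).le
  · have : c' = !c := by cases c <;> cases c' <;> simp_all
    subst this
    exact h.le_right c s s'

lemma Minl.condN {η : MulAut F2} (h : Minl η) {l m k : Bool × Bool} (h1 : Adm l m) (h2 : Adm m k) :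
    flen (η (lt l)) + flen (η (lt k)) <
      flen (η (lt l) * η (lt m)) + flen (η (lt m) * η (lt k)) := by
  have b1 := h.le_left' h1
  have b2 := h.le_right' h2
  by_contra hcon
  push Not at hcon
  have E1 : flen (η (lt l) * η (lt m)) = flen (η (lt l)) := by omega
  have E2 : flen (η (lt m) * η (lt k)) = flen (η (lt k)) := by omega
  rcases l with ⟨c, s⟩
  rcases m with ⟨c', s'⟩
  rcases k with ⟨c'', s''⟩
  have hY : η (lt (c', s')) ≠ 1 := aut_ne_one η (lt_ne_one _)
  have hsq := flen_sq_gt hY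
  by_cases hc : c = c'
  · have := h1 hc
    simp at this
    subst hc this
    omega
  by_cases hc' : c' = c''
  · have := h2 hc'
    simp at this
    subst hc' this
    omega
  have e1 : c' = !c := by cases c <;> cases c' <;> simp_all
  subst e1
  have e2 : c'' = c := by cases c <;> cases c'' <;> simp_all
  subst e2
  by_cases hs : s'' = s
  · subst hs
    have hbas := fun g => h.basis g (!c'') s' s''
    rw [Bool.not_not] at hbas
    have hle := h.le_right c'' s'' s'
    generalize η (lt (c'', s'')) = X at *
    generalize η (lt (!c'', s')) = Y at *
    have hYp := flen_pos hY
    have par := flen_mul_parity X Y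
    obtain ⟨s, z, hs, hl, ha⟩ := exists_initial Y (flen Y / 2) (by omega)
    obtain ⟨s₁, z₁, hs₁, hl₁, ha₁⟩ := exists_initial X⁻¹ (flen Y / 2) (by rw [flen_inv]; omega)
    obtain ⟨p₁, q₁, hp₁, hm₁, hb₁⟩ := exists_initial X (flen Y / 2) (by omega)
    have eY : Y⁻¹ = z⁻¹ * s⁻¹ := by rw [hs]; group
    have hs1 : s = s₁ := by
      apply initial_eq (x := Y) (y := X⁻¹)
      · rw [hs, btw_mul, ← hs, ha]
      · rw [hs₁, btw_mul, ← hs₁, ha₁]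
      · omega
      · have : d Y X⁻¹ = flen (X * Y) := by rw [d_comm]; simp [d]
        rw [flen_inv]; omega
    subst hs1
    have hz1 : z⁻¹ = p₁ := by
      apply initial_eq (x := Y⁻¹) (y := X)
      · rw [eY, btw_mul, ← eY, flen_inv, flen_inv, flen_inv]; omega
      · rw [hp₁, btw_mul, ← hp₁, hb₁]
      · rw [flen_inv]; omega
      · have : d Y⁻¹ X = flen (Y * X) := by simp [d]
        rw [flen_inv, flen_inv]; omega
    have key := hbas s⁻¹
    have k1 : flen (s⁻¹ * Y * s⁻¹⁻¹) ≤ flen Y := by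
      have : s⁻¹ * Y * s⁻¹⁻¹ = z * s := by rw [hs]; group
      rw [this]; have := flen_mul_le z s; omega
    have k2 : flen (s⁻¹ * (Y * X) * s⁻¹⁻¹) + flen Y ≤ flen X := by
      have e : flen (s⁻¹ * (Y * X) * s⁻¹⁻¹) = d z⁻¹ (X * s) := by
        unfold d; congr 1; rw [hs]; group
      rw [e]
      have h4 := four_pt 1 X z⁻¹ (X * s)
      have f1 : d X (X * s) = flen s := by simp [d]
      have f2 : d 1 (X * s) = flen z₁ := by
        rw [d_one, ← flen_inv, mul_inv_rev, hs₁]; simp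
      have f3 : d X z⁻¹ = flen q₁ := by rw [d_comm, hp₁, ← hz1]; simp [d]
      rw [d_one, d_one] at h4
      rw [flen_inv] at *
      omega
    omega
  · have : s'' = !s := by cases s <;> cases s'' <;> simp_all
    subst this
    rw [← lt_inv, map_inv] at E2 
    rw [flen_inv] at E2
    generalize η (lt (c'', s)) = X at *
    generalize η (lt (!c'', s')) = Y at *
    have h4 := four_pt 1 X⁻¹ Y Y⁻¹
    rw [d_one, d_one, d_one, flen_inv, flen_inv] at h4
    have f1 : d X⁻¹ Y = flen (X * Y) := by simp [d]
    have f2 : d X⁻¹ Y⁻¹ = flen (Y * X⁻¹) := by rw [d_comm]; simp [d]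
    have f3 : d Y Y⁻¹ = flen (Y * Y) := by rw [d_comm]; simp [d]
    omega

lemma Minl.step {η : MulAut F2} (h : Minl η) : ∀ (Z : List (Bool × Bool)) (l m : Bool × Bool),
    Adm l m → FreeGroup.IsReduced (m :: Z) →
    flen (η (lt l * FreeGroup.mk (m :: Z))) + flen (η (lt m)) =
      flen (η (FreeGroup.mk (m :: Z))) + flen (η (lt l) * η (lt m)) := by
  intro Z
  induction Z with
  | nil => intro l m _ _; rw [← lt, map_mul]; ring
  | cons k Z ih =>
    intro l m h1 h2
    rw [FreeGroup.isReduced_cons_cons] at h2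
    have hN := h.condN h1 h2.1
    have ih := ih m k h2.1 h2.2
    rw [mk_cons m]
    rw [map_mul] at ih ⊢
    rw [map_mul]
    generalize η (lt l) = X at *
    generalize η (lt m) = Y at *
    generalize η (lt k) = W at *
    generalize η (FreeGroup.mk (k :: Z)) = V at *
    have h4 := four_pt 1 (Y * V) X⁻¹ Y
    have h5 := four_pt 1 Y X⁻¹ (Y * V)
    simp only [d_one, flen_inv] at *
    have f1 : d X⁻¹ Y = flen (X * Y) := by simp [d]
    have f2 : d Y (Y * V) = flen V := by simp [d]
    have f3 : d X⁻¹ (Y * V) = flen (X * (Y * V)) := by simp [d]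
    have f4 := d_comm Y (Y * V)
    have f5 := d_comm X⁻¹ Y
    have f6 := d_comm X⁻¹ (Y * V)
    omega

lemma Minl.grow {η : MulAut F2} (h : Minl η) : ∀ (Z : List (Bool × Bool)) (l m : Bool × Bool),
    Adm l m → FreeGroup.IsReduced (m :: Z) →
    2 * (Z.length + 1) + flen (η (lt l)) + flen (η (lt m)) ≤
      2 * flen (η (FreeGroup.mk (m :: Z))) + flen (η (lt l) * η (lt m)) := by
  intro Z
  induction Z with
  | nil =>
    intro l m h1 _
    rw [← lt]
    have := h.le_left' h1
    have hp := flen_pos (aut_ne_one η (lt_ne_one m))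
    have par := flen_mul_parity (η (lt l)) (η (lt m))
    simp only [List.length_nil]
    omega
  | cons k Z ih =>
    intro l m h1 h2
    rw [FreeGroup.isReduced_cons_cons] at h2
    have hN := h.condN h1 h2.1
    have ih := ih m k h2.1 h2.2
    have st := h.step Z m k h2.1 h2.2
    rw [mk_cons m]
    have par := flen_mul_parity (η (lt l)) (η (lt m))
    have par2 := flen_mul_parity (η (lt m)) (η (lt k))
    rw [List.length_cons]
    omega

lemma Minl.sgn {η : MulAut F2} (h : Minl η) : Sgn η := by
  have key : ∀ z, flen z ≤ flen (η z) := by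
    intro z
    have hr : FreeGroup.IsReduced z.toWord := FreeGroup.isReduced_toWord
    have e : z = FreeGroup.mk z.toWord := FreeGroup.mk_toWord.symm
    unfold flen; unfold flen at *
    cases hz : z.toWord with
    | nil => simp
    | cons m Z =>
      rw [hz] at e hr
      have := h.grow Z m m (fun _ => rfl) hr
      have h2 := flen_mul_le (η (lt m)) (η (lt m))
      unfold flen at this h2
      rw [e, List.length_cons]; omega
  have : Sgn η⁻¹ := by
    constructor
    · have := key (η⁻¹ genA)
      have h2 := flen_pos (aut_ne_one η⁻¹ genA_ne_one)
      rw [MulAut.apply_inv_self, flen_genA] at this; omega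
    · have := key (η⁻¹ genB)
      have h2 := flen_pos (aut_ne_one η⁻¹ genB_ne_one)
      rw [MulAut.apply_inv_self, flen_genB] at this; omega
  simpa using this.inv

theorem all_NF : ∀ (N : ℕ) (η : MulAut F2), flen (η genA) + flen (η genB) ≤ N → NF η := by
  intro N
  induction N with
  | zero =>
    intro η h
    have h2 := flen_pos (aut_ne_one η genA_ne_one)
    omega
  | succ N ih =>
    intro η h
    by_cases hm : Minl η
    · have := PosA.one.nf.sgn_left hm.sgn
      simpa using this
    · unfold Minl at hm
      push Not at hm
      obtain ⟨g, ε, he, hlt⟩ := hm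
      have h1 : NF (MulAut.conj g * η * ε * LL) := by
        apply ih
        have e : g * (η (ε genA) * η (ε genB)) * g⁻¹ =
          g * η (ε genA) * g⁻¹ * (g * η (ε genB) * g⁻¹) := by group
        simp only [MulAut.mul_apply, LL_a, LL_b, MulAut.conj_apply, map_mul] at *
        rw [e] at hlt
        omega
      have := (h1.LLinv.sgn_right he.inv).conj g⁻¹
      simpa [mul_assoc] using this


/-! ### Bounded cancellation -/

lemma toWord_lt_mul (l : Bool × Bool) (x : F2) (h : x.toWord.head? ≠ some (l.1, !l.2)) :
    (lt l * x).toWord = l :: x.toWord := by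
  have e : lt l * x = FreeGroup.mk (l :: x.toWord) := by
    rw [mk_cons, FreeGroup.mk_toWord]
  rw [e, toWord_mk_reduced]
  have hr : FreeGroup.IsReduced x.toWord := FreeGroup.isReduced_toWord
  cases hx : x.toWord with
  | nil => simp
  | cons m t =>
    rw [hx] at hr h
    rw [FreeGroup.isReduced_cons_cons]
    refine ⟨fun h1 => ?_, hr⟩
    by_contra h2
    apply h
    rcases l with ⟨c, s⟩; rcases m with ⟨c', s'⟩
    simp at *
    subst h1
    cases s <;> cases s' <;> simp_all

/-- head letter -/
def hd (x : F2) : Option (Bool × Bool) := x.toWord.head?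

lemma hd_lt_mul (l : Bool × Bool) (x : F2) (h : hd x ≠ some (l.1, !l.2)) : hd (lt l * x) = some l := by
  unfold hd at *; rw [toWord_lt_mul l x h]; rfl

/-- head behaviour of `LL` -/
def HL (Z : List (Bool × Bool)) : Prop :=
  match Z with
  | [] => LL (FreeGroup.mk Z) = 1
  | (false, true) :: _ => ∃ q, LL (FreeGroup.mk Z) = lt (true, true) * q ∧ hd q = some (false, true)
  | (false, false) :: _ => hd (LL (FreeGroup.mk Z)) = some (false, false)
  | (true, true) :: _ => ∃ q, LL (FreeGroup.mk Z) = lt (true, true) * q ∧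
      hd q ≠ some (false, true) ∧ hd q ≠ some (true, false)
  | (true, false) :: _ => hd (LL (FreeGroup.mk Z)) = some (true, false) ∨
      hd (LL (FreeGroup.mk Z)) = some (false, true)

lemma hd_one : hd 1 = none := by simp [hd]

lemma LL_lt : LL (lt (true, true)) = lt (true, true) ∧ LL (lt (true, false)) = lt (true, false) ∧
    LL (lt (false, true)) = lt (true, true) * lt (false, true) ∧
    LL (lt (false, false)) = lt (false, false) * lt (true, false) := by
  refine ⟨LL_a, ?_, LL_b, ?_⟩
  · rw [lt_false, map_inv]; congr 1
  · rw [lt_false, lt_false, map_inv, ← mul_inv_rev]; congr 1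

lemma HL_all : ∀ Z, FreeGroup.IsReduced Z → HL Z := by
  intro Z
  obtain ⟨L1, L2, L3, L4⟩ := LL_lt
  have one : (FreeGroup.mk ([] : List (Bool × Bool))) = 1 := rfl
  induction Z with
  | nil => intro _; unfold HL; simp [one]
  | cons x Z ih =>
    intro hr
    have ih := ih (List.IsChain.tail hr)
    rcases x with ⟨c, s⟩
    rcases Z with _ | ⟨⟨c', s'⟩, Z⟩
    · cases c <;> cases s <;> unfold HL <;> simp only [mk_cons, one, mul_one, L1, L2, L3, L4]
      · exact hd_lt_mul (false, false) _ (by decide)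
      · exact ⟨_, rfl, by decide⟩
      · left; rfl
      · exact ⟨1, by simp, by decide⟩
    rw [FreeGroup.isReduced_cons_cons] at hr
    have hr := hr.1
    cases c <;> cases s
    -- b⁻¹
    · show hd (LL (FreeGroup.mk ((false, false) :: (c', s') :: Z))) = some (false, false)
      rw [mk_cons, map_mul, L4, mul_assoc]
      apply hd_lt_mul
      cases c' <;> cases s'
      · have ih : hd (LL (FreeGroup.mk ((false, false) :: Z))) = some (false, false) := ih
        rw [hd_lt_mul _ _ (by rw [ih]; decide)]; decide
      · exact absurd (hr rfl) (by decide)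
      · have ih : hd (LL (FreeGroup.mk ((true, false) :: Z))) = some (true, false) ∨
          hd (LL (FreeGroup.mk ((true, false) :: Z))) = some (false, true) := ih
        rw [hd_lt_mul _ _ (by rcases ih with ih | ih <;> rw [ih] <;> decide)]; decide
      · obtain ⟨q, h1, h2, h3⟩ : ∃ q, LL (FreeGroup.mk ((true, true) :: Z)) = lt (true, true) * q ∧
          hd q ≠ some (false, true) ∧ hd q ≠ some (true, false) := ih
        rw [h1, lt_false, lt_true, inv_mul_cancel_left]; exact h2
    -- b
    · show ∃ q, LL (FreeGroup.mk ((false, true) :: (c', s') :: Z)) = lt (true, true) * q ∧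
        hd q = some (false, true)
      rw [mk_cons, map_mul, L3, mul_assoc]
      refine ⟨_, rfl, ?_⟩
      apply hd_lt_mul
      cases c' <;> cases s'
      · exact absurd (hr rfl) (by decide)
      · obtain ⟨q, h1, h2⟩ : ∃ q, LL (FreeGroup.mk ((false, true) :: Z)) = lt (true, true) * q ∧
          hd q = some (false, true) := ih
        rw [h1, hd_lt_mul _ _ (by rw [h2]; decide)]; decide
      · have ih : hd (LL (FreeGroup.mk ((true, false) :: Z))) = some (true, false) ∨
          hd (LL (FreeGroup.mk ((true, false) :: Z))) = some (false, true) := ih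
        rcases ih with ih | ih <;> rw [ih] <;> decide
      · obtain ⟨q, h1, h2, h3⟩ : ∃ q, LL (FreeGroup.mk ((true, true) :: Z)) = lt (true, true) * q ∧
          hd q ≠ some (false, true) ∧ hd q ≠ some (true, false) := ih
        rw [h1, hd_lt_mul _ _ h3]; decide
    -- a⁻¹
    · show hd (LL (FreeGroup.mk ((true, false) :: (c', s') :: Z))) = some (true, false) ∨
        hd (LL (FreeGroup.mk ((true, false) :: (c', s') :: Z))) = some (false, true)
      rw [mk_cons, map_mul, L2]
      cases c' <;> cases s'
      · have ih : hd (LL (FreeGroup.mk ((false, false) :: Z))) = some (false, false) := ih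
        left
        exact hd_lt_mul _ _ (by rw [ih]; decide)
      · obtain ⟨q, h1, h2⟩ : ∃ q, LL (FreeGroup.mk ((false, true) :: Z)) = lt (true, true) * q ∧
          hd q = some (false, true) := ih
        right
        rw [h1, lt_false, lt_true, inv_mul_cancel_left]; exact h2
      · have ih : hd (LL (FreeGroup.mk ((true, false) :: Z))) = some (true, false) ∨
          hd (LL (FreeGroup.mk ((true, false) :: Z))) = some (false, true) := ih
        left
        exact hd_lt_mul _ _ (by rcases ih with ih | ih <;> rw [ih] <;> decide)
      · exact absurd (hr rfl) (by decide)
    -- a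
    · show ∃ q, LL (FreeGroup.mk ((true, true) :: (c', s') :: Z)) = lt (true, true) * q ∧
          hd q ≠ some (false, true) ∧ hd q ≠ some (true, false)
      rw [mk_cons, map_mul, L1]
      refine ⟨_, rfl, ?_⟩
      cases c' <;> cases s'
      · have ih : hd (LL (FreeGroup.mk ((false, false) :: Z))) = some (false, false) := ih
        rw [ih]; decide
      · obtain ⟨q, h1, h2⟩ : ∃ q, LL (FreeGroup.mk ((false, true) :: Z)) = lt (true, true) * q ∧
          hd q = some (false, true) := ih
        rw [h1, hd_lt_mul _ _ (by rw [h2]; decide)]; decide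
      · exact absurd (hr rfl) (by decide)
      · obtain ⟨q, h1, h2, h3⟩ : ∃ q, LL (FreeGroup.mk ((true, true) :: Z)) = lt (true, true) * q ∧
          hd q ≠ some (false, true) ∧ hd q ≠ some (true, false) := ih
        rw [h1, hd_lt_mul _ _ h3]; decide

lemma d_of_hd {x y : F2} (h : hd x ≠ hd y ∨ hd x = none) : d x y = flen x + flen y := by
  have h1 := d_lcp x y
  have : lcp x.toWord y.toWord = 0 := by
    unfold hd at h
    rcases hx : x.toWord with _ | ⟨l, t⟩ <;> rcases hy : y.toWord with _ | ⟨l', t'⟩ <;>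
      rw [hx, hy] at h <;> simp [lcp]
    simpa using h
  omega

lemma hd_of_d {x y : F2} (h : d x y = flen x + flen y) : hd x ≠ hd y ∨ hd x = none := by
  have h1 := d_lcp x y
  have : lcp x.toWord y.toWord = 0 := by omega
  unfold hd
  rcases hx : x.toWord with _ | ⟨l, t⟩ <;> rcases hy : y.toWord with _ | ⟨l', t'⟩ <;>
      rw [hx, hy] at this <;> simp [lcp] at this ⊢
  exact this

/-- the conclusion of the head analysis -/
def Spl (x y : F2) : Prop := ∃ r q q', (r = 1 ∨ r = genA) ∧ x = r * q ∧ y = r * q' ∧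
  d q q' = flen q + flen q'

lemma LL_split {z z' : F2} (h : d z z' = flen z + flen z') : Spl (LL z) (LL z') := by
  have hh := hd_of_d h
  have r1 : FreeGroup.IsReduced z.toWord := FreeGroup.isReduced_toWord
  have r2 : FreeGroup.IsReduced z'.toWord := FreeGroup.isReduced_toWord
  have h1 := HL_all _ r1
  have h2 := HL_all _ r2
  have e1 : FreeGroup.mk z.toWord = z := FreeGroup.mk_toWord
  have e2 : FreeGroup.mk z'.toWord = z' := FreeGroup.mk_toWord
  have triv : ∀ x y : F2, (hd x ≠ hd y ∨ hd x = none) → Spl x y := fun x y hxy =>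
    ⟨1, x, y, Or.inl rfl, by simp, by simp, d_of_hd hxy⟩
  have key : ∀ z : F2, z = 1 ∨ 
     (hd z = some (false, true) ∧ ∃ q, LL z = lt (true, true) * q ∧ hd q = some (false, true)) ∨
     (hd z = some (false, false) ∧ hd (LL z) = some (false, false)) ∨
     (hd z = some (true, true) ∧ ∃ q, LL z = lt (true, true) * q ∧
      hd q ≠ some (false, true) ∧ hd q ≠ some (true, false)) ∨
     (hd z = some (true, false) ∧ (hd (LL z) = some (true, false) ∨
      hd (LL z) = some (false, true))) := by
    intro z
    have r1 : FreeGroup.IsReduced z.toWord := FreeGroup.isReduced_toWord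
    have h1 := HL_all _ r1
    have e1 : FreeGroup.mk z.toWord = z := FreeGroup.mk_toWord
    unfold HL at h1
    unfold hd
    rcases hz : z.toWord with _ | ⟨⟨c, s⟩, t⟩
    · left; rw [← e1, hz]; rfl
    · right
      rw [hz] at h1 e1
      cases c <;> cases s <;> simp only [e1] at h1 <;> simp [hd] at h1 ⊢ <;> assumption
  rcases key z with rfl | ⟨k1, q, hq, hq'⟩ | ⟨k1, hq⟩ | ⟨k1, q, hq, hq', hq''⟩ | ⟨k1, hq⟩
  · rw [map_one]; exact triv _ _ (Or.inr hd_one)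
  all_goals rcases key z' with rfl | ⟨k2, p, hp, hp'⟩ | ⟨k2, hp⟩ | ⟨k2, p, hp, hp', hp''⟩ | ⟨k2, hp⟩
  all_goals first
    | (rw [k1, k2] at hh; exfalso; simp at hh; done)
    | skip
  · rw [map_one]; apply triv; left; rw [hd_one, hq, hd_lt_mul _ _ (by rw [hq']; decide)]; decide
  · apply triv; left; rw [hp, hq, hd_lt_mul _ _ (by rw [hq']; decide)]; decide
  · refine ⟨genA, q, p, Or.inr rfl, hq, hp, d_of_hd (Or.inl ?_)⟩
    rw [hq']; exact hp'.symm
  · apply triv; left; rw [hq, hd_lt_mul _ _ (by rw [hq']; decide)]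
    rcases hp with hp | hp <;> rw [hp] <;> decide
  · rw [map_one]; apply triv; left; rw [hq, hd_one]; decide
  · apply triv; left; rw [hq, hp, hd_lt_mul _ _ (by rw [hp']; decide)]; decide
  · apply triv; left; rw [hq, hp, hd_lt_mul _ _ hp'']; decide
  · apply triv; left; rw [hq]; rcases hp with hp | hp <;> rw [hp] <;> decide
  · rw [map_one]; apply triv; left; rw [hd_one, hq, hd_lt_mul _ _ hq'']; decide
  · refine ⟨genA, q, p, Or.inr rfl, hq, hp, d_of_hd (Or.inl ?_)⟩
    rw [hp']; exact hq'
  · apply triv; left; rw [hp, hq, hd_lt_mul _ _ hq'']; decide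
  · apply triv; left; rw [hq, hd_lt_mul _ _ hq'']
    rcases hp with hp | hp <;> rw [hp] <;> decide
  · rw [map_one]; apply triv; left; rw [hd_one]; rcases hq with hq | hq <;> rw [hq] <;> decide
  · apply triv; left; rw [hp, hd_lt_mul _ _ (by rw [hp']; decide)]
    rcases hq with hq | hq <;> rw [hq] <;> decide
  · apply triv; left; rw [hp]
    rcases hq with hq | hq <;> rw [hq] <;> decide
  · apply triv; left; rw [hp, hd_lt_mul _ _ hp'']
    rcases hq with hq | hq <;> rw [hq] <;> decide

/-- bounded cancellation -/
def BC (η : MulAut F2) (C : ℕ) : Prop := ∀ z z' : F2, d z z' = flen z + flen z' →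
  flen (η z) + flen (η z') ≤ d (η z) (η z') + 2 * C

lemma Sgn.d_eq {ε : MulAut F2} (h : Sgn ε) (x y : F2) : d (ε x) (ε y) = d x y := by
  unfold d; rw [← map_inv, ← map_mul, h.iso]

lemma BC.right {η ε : MulAut F2} {C : ℕ} (h : BC η C) (he : Sgn ε) : BC (η * ε) C := by
  intro z z' hz
  exact h (ε z) (ε z') (by rw [he.d_eq, he.iso, he.iso, hz])

lemma BC.left {η ε : MulAut F2} {C : ℕ} (h : BC η C) (he : Sgn ε) : BC (ε * η) C := by
  intro z z' hz
  simp only [MulAut.mul_apply]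
  rw [he.d_eq, he.iso, he.iso]; exact h z z' hz

lemma BC.LL {η : MulAut F2} {C : ℕ} (h : BC η C) : BC (η * LL) (C + flen (η genA)) := by
  intro z z' hz
  simp only [MulAut.mul_apply]
  obtain ⟨r, q, q', hr, e1, e2, e3⟩ := LL_split hz
  rw [e1, e2]
  simp only [map_mul]
  rw [d_mul_left]
  have h1 := h q q' e3
  have h2 := flen_mul_le (η r) (η q)
  have h3 := flen_mul_le (η r) (η q')
  have h4 : flen (η r) ≤ flen (η genA) := by
    rcases hr with rfl | rfl
    · simp [flen_one]
    · rfl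
  omega

lemma PosA.posW {φ : MulAut F2} (h : PosA φ) : PosW (φ genA) ∧ PosW (φ genB) := by
  induction h with
  | one => exact ⟨PosW.of true, PosW.of false⟩
  | swap φ h ih => simpa using ih.symm
  | twist φ h ih => simpa using ⟨ih.1, ih.1.mul ih.2⟩

lemma PosA.bc {φ : MulAut F2} (h : PosA φ) : BC φ (flen (φ genA) + flen (φ genB)) := by
  induction h with
  | one => intro z z' h; simp [h]
  | swap φ h ih =>
    have := ih.right sgn_sw
    simpa [add_comm] using this
  | twist φ h ih =>
    have := ih.LL
    have e : flen ((φ * IRSPaper.LL) genA) + flen ((φ * IRSPaper.LL) genB) = flen (φ genA) + flen (φ genB) + flen (φ genA) := by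
      simp only [MulAut.mul_apply, LL_a, LL_b, map_mul]
      rw [h.posW.1.flen_mul h.posW.2]; ring
    rw [e]; exact this

/-- total length -/
def tot (η : MulAut F2) : ℕ := flen (η genA) + flen (η genB)

/-- tame automorphisms -/
structure Tame (η : MulAut F2) : Prop where
  pa : ∀ i, flen (η genA ^ i) = i * flen (η genA)
  pb : ∀ i, flen (η genB ^ i) = i * flen (η genB)
  bc : BC η (tot η)

lemma PosA.tame {φ : MulAut F2} (h : PosA φ) : Tame φ :=
  ⟨h.posW.1.flen_pow, h.posW.2.flen_pow, h.bc⟩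

lemma Tame.left {η ε : MulAut F2} (h : Tame η) (he : Sgn ε) : Tame (ε * η) := by
  refine ⟨?_, ?_, ?_⟩
  · intro i; simp only [MulAut.mul_apply, ← map_pow]; rw [he.iso, he.iso, map_pow, h.pa]
  · intro i; simp only [MulAut.mul_apply, ← map_pow]; rw [he.iso, he.iso, map_pow, h.pb]
  · have : tot (ε * η) = tot η := by simp [tot, he.iso]
    rw [this]; exact h.bc.left he

lemma Tame.right {η ε : MulAut F2} (h : Tame η) (he : Sgn ε) : Tame (η * ε) := by
  have hl : ∀ x : F2, flen x = 1 → ∀ i, flen (η x ^ i) = i * flen (η x) := by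
    intro x hx i
    rcases flen_one_cases hx with rfl | rfl | rfl | rfl
    · exact h.pa i
    · rw [map_inv, inv_pow, flen_inv, flen_inv]; exact h.pa i
    · exact h.pb i
    · rw [map_inv, inv_pow, flen_inv, flen_inv]; exact h.pb i
  refine ⟨hl _ he.1, hl _ he.2, ?_⟩
  have : tot (η * ε) = tot η := by
    rcases he.cases with h | h | h | h | h | h | h | h <;> subst h <;>
      simp [tot, flen_inv, add_comm]
  rw [this]; exact h.bc.right he

theorem exists_tame (η : MulAut F2) : ∃ g, Tame (MulAut.conj g * η) := by
  obtain ⟨g, σ, φ, ε, h1, h2, h3, h4⟩ := all_NF _ η le_rfl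
  refine ⟨g⁻¹, ?_⟩
  have : MulAut.conj g⁻¹ * η = σ * φ * ε := by
    rw [h4, map_inv]; group
  rw [this]
  exact (h2.tame.left h1).right h3

lemma Tame.btw {η : MulAut F2} (h : Tame η) {p v q : F2} (hb : Btw p v q) :
    d (η p) (η v) + d (η v) (η q) ≤ d (η p) (η q) + 2 * tot η := by
  have := h.bc (v⁻¹ * p) (v⁻¹ * q) (by rw [d_mul_left]; rw [← hb, d_comm p v]; rfl)
  simp only [map_mul, map_inv] at this
  rw [d_mul_left] at this
  rw [d_comm (η p)]
  exact this


/-! ### The word w -/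

/-- letter `a` at position `r` of the infinite word -/
def isAb (r : ℕ) : Bool := decide (Nat.sqrt r * (Nat.sqrt r + 1) ≤ r)

lemma isAb_true {i r : ℕ} (h1 : i * (i + 1) ≤ r) (h2 : r < (i + 1) * (i + 1)) : isAb r = true := by
  have : Nat.sqrt r = i := by
    symm; rw [Nat.eq_sqrt]; constructor
    · nlinarith
    · exact h2
  simp [isAb, this, h1]

lemma isAb_false {i r : ℕ} (h1 : i * i ≤ r) (h2 : r < i * (i + 1)) : isAb r = false := by
  have : Nat.sqrt r = i := by
    symm; rw [Nat.eq_sqrt]; constructor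
    · exact h1
    · nlinarith
  simp [isAb, this, h2]

lemma isAb_cases (r : ℕ) : (∃ i, i * (i + 1) ≤ r ∧ r < (i + 1) * (i + 1) ∧ isAb r = true) ∨
    (∃ i, i * i ≤ r ∧ r < i * (i + 1) ∧ isAb r = false) := by
  have h1 := Nat.sqrt_le r
  have h2 := Nat.lt_succ_sqrt r
  by_cases h : Nat.sqrt r * (Nat.sqrt r + 1) ≤ r
  · left; exact ⟨_, h, h2, isAb_true h h2⟩
  · right; push Not at h; exact ⟨_, h1, h, isAb_false h1 h⟩

/-- letters of the periodic word -/
def lw (n p : ℕ) : Bool := isAb (p % (n * (n + 1)))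

lemma posW_a : PosW genA := PosW.of true
lemma posW_b : PosW genB := PosW.of false

lemma wordW_succ (n : ℕ) : wordW (n + 1) = wordW n * (genA ^ (n + 1) * genB ^ (n + 1)) := by
  unfold wordW
  rw [List.range_succ, List.map_append, List.prod_append]; simp

lemma posW_w (n : ℕ) : PosW (wordW n) := by
  induction n with
  | zero => simpa [wordW] using PosW.one
  | succ n ih => rw [wordW_succ]; exact ih.mul ((posW_a.pow _).mul (posW_b.pow _))

lemma flen_w (n : ℕ) : flen (wordW n) = n * (n + 1) := by
  induction n with
  | zero => simp [wordW, flen_one]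
  | succ n ih =>
    rw [wordW_succ, (posW_w n).flen_mul ((posW_a.pow _).mul (posW_b.pow _)),
      (posW_a.pow _).flen_mul (posW_b.pow _), posW_a.flen_pow, posW_b.flen_pow, ih, flen_genA, flen_genB]
    ring

lemma flen_wpow (n K : ℕ) : flen (wordW n ^ K) = K * (n * (n + 1)) := by
  rw [(posW_w n).flen_pow, flen_w]

lemma toWord_genA_pow (k : ℕ) : (genA ^ k).toWord = List.replicate k (true, true) :=
  FreeGroup.toWord_of_pow _ _
lemma toWord_genB_pow (k : ℕ) : (genB ^ k).toWord = List.replicate k (false, true) :=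
  FreeGroup.toWord_of_pow _ _

lemma toWord_w (n : ℕ) : (wordW n).toWord = (List.range (n * (n + 1))).map (fun r => (isAb r, true)) := by
  induction n with
  | zero => simp [wordW]
  | succ n ih =>
    rw [wordW_succ, (posW_w n).toWord_mul ((posW_a.pow _).mul (posW_b.pow _)),
      (posW_a.pow _).toWord_mul (posW_b.pow _), toWord_genA_pow, toWord_genB_pow, ih]
    have e : (n + 1) * (n + 1 + 1) = n * (n + 1) + ((n + 1) + (n + 1)) := by ring
    rw [e, List.range_add, List.map_append, List.range_add, List.map_append, List.map_append]
    congr 1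
    congr 1
    · symm; rw [List.eq_replicate_iff]
      refine ⟨by simp, ?_⟩
      intro b hb
      simp at hb
      obtain ⟨j, hj, rfl⟩ := hb
      rw [isAb_true (i := n) (by omega) (by nlinarith)]
    · symm; rw [List.eq_replicate_iff]
      refine ⟨by simp, ?_⟩
      intro b hb
      simp at hb
      obtain ⟨j, hj, rfl⟩ := hb
      rw [isAb_false (i := n + 1) (by nlinarith) (by nlinarith)]

lemma toWord_wpow (n K : ℕ) :
    (wordW n ^ K).toWord = (List.range (K * (n * (n + 1)))).map (fun p => (lw n p, true)) := by
  induction K with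
  | zero => simp
  | succ K ih =>
    rw [pow_succ, ((posW_w n).pow K).toWord_mul (posW_w n), ih, toWord_w, Nat.add_mul, one_mul,
      List.range_add, List.map_append]
    congr 1
    rw [List.map_map]
    apply List.map_congr_left
    intro r hr
    rw [List.mem_range] at hr
    simp only [Function.comp, lw]
    rw [mul_comm K, Nat.mul_add_mod, Nat.mod_eq_of_lt hr]

/-- additive factorisation of a power of w -/
def Fac (n K : ℕ) (α γ β : F2) : Prop :=
  wordW n ^ K = α * γ * β ∧ flen (wordW n ^ K) = flen α + flen γ + flen β

lemma Fac.toWord {n K : ℕ} {α γ β : F2} (h : Fac n K α γ β) :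
    (wordW n ^ K).toWord = α.toWord ++ (γ.toWord ++ β.toWord) := by
  have h1 := flen_mul_le (α * γ) β
  have h2 := flen_mul_le α γ
  have h3 := h.2
  have h4 := h.1
  rw [h4] at h3
  rw [h4, toWord_mul_of_len (by omega), toWord_mul_of_len (by omega), List.append_assoc]

lemma Fac.letters {n K : ℕ} {α γ β : F2} (h : Fac n K α γ β) {j : ℕ} (hj : j < flen γ) :
    γ.toWord[j]? = some (lw n (flen α + j), true) := by
  have h1 := h.toWord
  have h2 : (wordW n ^ K).toWord[flen α + j]? = γ.toWord[j]? := by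
    rw [h1, List.getElem?_append_right (by unfold flen; omega)]
    unfold flen at hj ⊢
    rw [Nat.add_sub_cancel_left, List.getElem?_append_left hj]
  rw [← h2, toWord_wpow]
  have h3 := h.2
  rw [flen_wpow] at h3
  rw [List.getElem?_map, List.getElem?_range (by omega)]; rfl

lemma ab_boundary {n p : ℕ} (hn : 1 ≤ n) (h1 : lw n p = true) (h2 : lw n (p + 1) = false) :
    ∃ m, 1 ≤ m ∧ m ≤ n ∧ (p + 1) % (n * (n + 1)) = m * m ∧ (∀ j < m, lw n (p + 1 + j) = false) ∧
      lw n (p + 1 + m) = true := by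
  unfold lw at *
  have hl : 0 < n * (n + 1) := by positivity
  generalize hℓ : n * (n + 1) = ℓ at *
  have hr := Nat.mod_lt p hl
  have hdm := Nat.div_add_mod p ℓ
  generalize p % ℓ = r at *
  rcases isAb_cases r with ⟨i, a1, a2, a3⟩ | ⟨i, a1, a2, a3⟩
  swap
  · rw [a3] at h1; simp at h1
  have hin : i < n := by
    by_contra hc; push Not at hc
    have : n * (n + 1) ≤ i * (i + 1) := Nat.mul_le_mul hc (by omega)
    omega
  have hsq : (i + 1) * (i + 1) ≤ n * n := Nat.mul_le_mul hin hin
  have hnn : n * n < ℓ := by nlinarith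
  have key : ∀ j, r + j < ℓ → (p + j) % ℓ = r + j := by
    intro j hj
    rw [← hdm, add_assoc, Nat.mul_add_mod, Nat.mod_eq_of_lt hj]
  rw [key 1 (by omega)] at h2
  have e : r + 1 = (i + 1) * (i + 1) := by
    by_contra hne
    have := isAb_true (i := i) (r := r + 1) (by omega) (by omega)
    rw [this] at h2; simp at h2
  have hmul : (i + 1) * (i + 1) + (i + 1) ≤ n * n + n := by omega
  have hmul2 : n * n + n = ℓ := by rw [← hℓ]; ring
  refine ⟨i + 1, by omega, hin, by rw [key 1 (by omega), e], ?_, ?_⟩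
  · intro j hj
    rw [add_assoc, key (1 + j) (by omega)]
    apply isAb_false (i := i + 1) (by omega)
    have : (i + 1) * (i + 1 + 1) = (i + 1) * (i + 1) + (i + 1) := by ring
    omega
  · by_cases hlt : r + (1 + (i + 1)) < ℓ
    · rw [add_assoc, key _ hlt]
      apply isAb_true (i := i + 1)
      · have : (i + 1) * (i + 1 + 1) = (i + 1) * (i + 1) + (i + 1) := by ring
        omega
      · nlinarith
    · have : (p + 1 + (i + 1)) % ℓ = 0 := by
        have e2 : p + 1 + (i + 1) = ℓ * (p / ℓ) + ℓ := by omega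
        rw [e2]; simp
      rw [this]; decide

lemma block_unique {n p p' m m' : ℕ} (g : ℕ) (h1 : ∀ j < m, lw n (p + j) = false) (h1' : lw n (p + m) = true)
    (h2 : ∀ j < m', lw n (p' + j) = false) (h2' : lw n (p' + m') = true)
    (h : ∀ j ≤ m, lw n (p' + j) = lw n (p + j)) : m = m' := by
  rcases lt_trichotomy m m' with hl | hl | hl
  · have := h2 m hl
    rw [h m le_rfl, h1'] at this; simp at this
  · exact hl
  · have := h m' hl.le
    rw [h2', h1 m' hl] at this; simp at this

lemma exists_up {f : ℕ → Bool} {o g : ℕ} (h : f o = f (o + g)) (hne : ∃ j ≤ g, f (o + j) ≠ f o) :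
    ∃ j < g, f (o + j) = true ∧ f (o + j + 1) = false := by
  by_contra hcon
  push Not at hcon
  have st : ∀ j k, j + k ≤ g → f (o + j) = true → f (o + j + k) = true := by
    intro j k
    induction k with
    | zero => intro _ h; exact h
    | succ k ih =>
      intro hk hj
      have := hcon (j + k) (by omega) (by rw [← add_assoc]; exact ih (by omega) hj)
      simpa [add_assoc] using this
  obtain ⟨j, hj, hj2⟩ := hne
  cases ho : f o with
  | true =>
    have := st 0 j (by omega) (by simpa using ho)
    simp [ho] at hj2 this
    rw [this] at hj2; simp at hj2
  | false =>
    rw [ho] at hj2 h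
    simp at hj2
    have := st j (g - j) (by omega) hj2
    rw [show o + j + (g - j) = o + g by omega, ← h] at this
    simp at this

lemma period_lemma {n o g : ℕ} (hn : 1 ≤ n) (h : ∀ j < 2 * g, lw n (o + j) = lw n (o + j + g)) :
    (∀ j < g, lw n (o + j) = lw n o) ∨ (n * (n + 1)) ∣ g := by
  by_cases hc : ∀ j < g, lw n (o + j) = lw n o
  · left; exact hc
  right
  push Not at hc
  obtain ⟨j, hj, hj2⟩ := hc
  obtain ⟨k, hk, hk1, hk2⟩ := exists_up (f := lw n) (o := o) (g := g)
    (by simpa using h 0 (by omega)) ⟨j, hj.le, hj2⟩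
  obtain ⟨m, m1, m2, m3, m4, m5⟩ := ab_boundary hn hk1 hk2
  have hk1' := h k (by omega)
  have hk2' := h (k + 1) (by omega)
  rw [hk1] at hk1'
  rw [← add_assoc, hk2] at hk2'
  obtain ⟨m', m1', m2', m3', m4', m5'⟩ := ab_boundary (p := o + k + g) hn hk1'.symm
    (by rw [hk2', show o + k + g + 1 = o + k + 1 + g by omega])
  have hm : m < g := by
    by_contra hcon
    push Not at hcon
    have := m4 (g - 1) (by omega)
    rw [show o + k + 1 + (g - 1) = o + k + g by omega, ← hk1'] at this
    simp at this
  have : m = m' := by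
    apply block_unique 0 m4 m5 m4' m5'
    intro j hj
    have := h (k + 1 + j) (by omega)
    rw [show o + k + g + 1 + j = o + (k + 1 + j) + g by omega, ← this]
    congr 1; omega
  subst this
  have hmod : (o + k + 1) % (n * (n+1)) = (o + k + 1 + g) % (n * (n+1)) := by
    rw [m3, ← m3']; congr 1; omega
  have := (Nat.modEq_iff_dvd' (show o + k + 1 ≤ o + k + 1 + g by omega)).1 hmod
  simpa using this

lemma btw_wpow_mono {n K : ℕ} {p : F2} (k : ℕ) (h : Btw 1 p (wordW n ^ K)) :
    Btw 1 p (wordW n ^ (K + k)) := by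
  unfold Btw at *
  have h1 := d_triangle p (wordW n ^ K) (wordW n ^ (K + k))
  have h2 := d_triangle 1 p (wordW n ^ (K + k))
  have h3 : d (wordW n ^ K) (wordW n ^ (K + k)) = flen (wordW n ^ k) := by
    rw [pow_add]; simp [d]
  simp only [d_one] at *
  rw [flen_wpow] at *
  have : (K + k) * (n * (n + 1)) = K * (n * (n + 1)) + k * (n * (n + 1)) := by ring
  omega

lemma winitial_unique {n K K' : ℕ} {p p' : F2} (h : Btw 1 p (wordW n ^ K))
    (h' : Btw 1 p' (wordW n ^ K')) (e : flen p = flen p') : p = p' := by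
  have h1 := btw_wpow_mono K' h
  have h2 := btw_wpow_mono K h'
  rw [add_comm K'] at h2
  exact h1.unique h2 (by simpa [d_one] using e)

lemma Fac.btw1 {n K : ℕ} {α γ β : F2} (h : Fac n K α γ β) : Btw 1 α (wordW n ^ K) := by
  unfold Btw
  rw [d_one, d_one]
  have h1 : d α (wordW n ^ K) ≤ flen γ + flen β := by
    rw [h.1]; unfold d
    have : α⁻¹ * (α * γ * β) = γ * β := by group
    rw [this]; exact flen_mul_le _ _
  have h2 := d_triangle 1 α (wordW n ^ K)
  rw [d_one, d_one] at h2
  have := h.2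
  omega

lemma Fac.shift {n K : ℕ} {α γ δ β : F2} (h : Fac n K α (γ * δ) β) (e : flen (γ * δ) = flen γ + flen δ) :
    Fac n K (α * γ) δ β := by
  refine ⟨by rw [h.1]; group, ?_⟩
  have h1 := flen_mul_le α γ
  have h2 := flen_mul_le (α * γ * δ) β
  have h3 := flen_mul_le (α * γ) δ
  have h5 : α * γ * δ * β = wordW n ^ K := by rw [h.1]; group
  rw [h5] at h2
  have := h.2
  omega

lemma Fac.assoc {n K : ℕ} {α γ δ β : F2} (h : Fac n K α (γ * δ) β) (e : flen (γ * δ) = flen γ + flen δ) :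
    Fac n K α γ (δ * β) := by
  refine ⟨by rw [h.1]; group, ?_⟩
  have h1 := flen_mul_le δ β
  have h2 := flen_mul_le (α * γ) (δ * β)
  have h3 := flen_mul_le α γ
  have h5 : α * γ * (δ * β) = wordW n ^ K := by rw [h.1]; group
  rw [h5] at h2
  have := h.2
  omega

/-- exponent hom of w -/
lemma hom_w (ρ : F2 →* Multiplicative ℤ) (n : ℕ) :
    2 * (ρ (wordW n)).toAdd = n * (n + 1) * ((ρ genA).toAdd + (ρ genB).toAdd) := by
  induction n with
  | zero => simp [wordW]
  | succ n ih =>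
    rw [wordW_succ]
    simp only [map_mul, map_pow, toAdd_mul, toAdd_pow]
    push_cast
    simp only [nsmul_eq_mul]
    push_cast
    linear_combination ih

lemma W1 {n K : ℕ} {α A β : F2} (hn : 2 ≤ n) (hF : Fac n K α (A ^ 3) β)
    (h3 : flen (A ^ 3) = 3 * flen A) (ρ : F2 →* Multiplicative ℤ)
    (hρ : (ρ A).toAdd = 1 ∨ (ρ A).toAdd = -1) : flen A = 1 := by
  have e3 : A ^ 3 = A * (A * A) := by rw [pow_succ, pow_two, mul_assoc]
  have l1 := flen_mul_le A (A * A)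
  have l2 := flen_mul_le A A
  have t1 : (A ^ 3).toWord = A.toWord ++ (A.toWord ++ A.toWord) := by
    rw [e3] at h3 ⊢
    rw [toWord_mul_of_len (by omega), toWord_mul_of_len (by omega)]
  rw [e3] at h3
  have eA : ∀ j, j < flen A → A.toWord[j]? = some (lw n (flen α + j), true) := by
    intro j hj
    have := hF.letters (j := j) (by rw [e3]; omega)
    rw [t1, List.getElem?_append_left hj] at this
    exact this
  have per : ∀ j < 2 * flen A, lw n (flen α + j) = lw n (flen α + j + flen A) := by
    intro j hj
    have a1 := hF.letters (j := j) (by rw [e3]; omega)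
    have a2 := hF.letters (j := j + flen A) (by rw [e3]; omega)
    have : (A ^ 3).toWord[j]? = (A ^ 3).toWord[j + flen A]? := by
      rw [t1]
      rw [List.getElem?_append_right (i := j + flen A) (by unfold flen; omega)]
      rw [show j + flen A - A.toWord.length = j by unfold flen; omega]
      by_cases hj2 : j < A.toWord.length
      · rw [List.getElem?_append_left hj2, List.getElem?_append_left hj2]
      · push Not at hj2
        rw [List.getElem?_append_right hj2, List.getElem?_append_right hj2]
        rw [List.getElem?_append_left]
        unfold flen at hj; omega
    rw [a1, a2] at this
    simp at this
    rw [this, add_assoc]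
  rcases period_lemma (by omega) per with hc | ⟨k, hk⟩
  · have : A = FreeGroup.of (lw n (flen α)) ^ flen A := by
      apply FreeGroup.toWord_injective
      rw [FreeGroup.toWord_of_pow, List.eq_replicate_iff]
      refine ⟨rfl, ?_⟩
      intro b hb
      obtain ⟨j, hj, rfl⟩ := List.mem_iff_getElem.1 hb
      have := eA j hj
      rw [List.getElem?_eq_getElem hj] at this
      simp at this
      rw [this, hc j hj]
    have h5 : (ρ A).toAdd = flen A * (ρ (FreeGroup.of (lw n (flen α)))).toAdd := by
      conv_lhs => rw [this]
      rw [map_pow, toAdd_pow, nsmul_eq_mul]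
    have : (flen A : ℤ) ∣ 1 := by
      rcases hρ with h | h
      · exact ⟨_, by rw [← h5, h]⟩
      · exact ⟨-(ρ (FreeGroup.of (lw n (flen α)))).toAdd, by rw [mul_neg, ← h5, h]; simp⟩
    have := Int.natCast_dvd_natCast.1 (by exact_mod_cast this : (flen A : ℤ) ∣ ((1 : ℕ) : ℤ))
    exact Nat.dvd_one.1 this
  · exfalso
    -- α A = w^k α
    have hs : Fac n K (α * A) (A * A) β := by
      rw [e3] at hF; exact hF.shift (by omega)
    have b1 := hs.btw1
    have hF' : Fac n K α A (A * A * β) := by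
      rw [e3] at hF; exact hF.assoc (by omega)
    have l3 : flen (α * A) = flen α + flen A := by
      have := hF'.toWord
      have q1 := flen_mul_le α A
      have q2 := flen_mul_le (α * A) (A * A * β)
      have q3 := hF'.2
      have q4 := hF'.1
      rw [← q4] at q2
      omega
    have b0 := hF.btw1
    have b2 : Btw 1 (wordW n ^ k * α) (wordW n ^ (k + K)) ∧ flen (wordW n ^ k * α) = flen (wordW n ^ k) + flen α := by
      have c1 : d (wordW n ^ k * α) (wordW n ^ (k + K)) = d α (wordW n ^ K) := by
        rw [pow_add, d_mul_left]
      have c2 := flen_mul_le (wordW n ^ k) α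
      have c3 := d_triangle 1 (wordW n ^ k * α) (wordW n ^ (k + K))
      unfold Btw at *
      simp only [d_one] at *
      rw [flen_wpow] at *
      have : (k + K) * (n * (n + 1)) = k * (n * (n + 1)) + K * (n * (n + 1)) := by ring
      have h6 : flen (wordW n ^ K) = K * (n * (n + 1)) := flen_wpow n K
      rw [flen_wpow]
      omega
    have e : α * A = wordW n ^ k * α := by
      apply winitial_unique b1 b2.1
      rw [l3, b2.2, flen_wpow, hk]; ring
    have e2 : ρ A = ρ (wordW n) ^ k := by
      have := congrArg ρ e
      simp only [map_mul, map_pow] at this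
      rw [mul_comm] at this
      exact mul_right_cancel this
    have h6 := hom_w ρ n
    have h7 : (ρ A).toAdd = k * (ρ (wordW n)).toAdd := by rw [e2, toAdd_pow, nsmul_eq_mul]
    have h8 : ((n : ℤ) * (n + 1)) ∣ 2 := by
      rcases hρ with h | h
      · refine ⟨k * ((ρ genA).toAdd + (ρ genB).toAdd), ?_⟩
        rw [h] at h7
        linear_combination 2 * h7 + k * h6
      · refine ⟨-(k * ((ρ genA).toAdd + (ρ genB).toAdd)), ?_⟩
        rw [h] at h7
        linear_combination -2 * h7 - k * h6
    have := Int.le_of_dvd (by norm_num) h8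
    have hn' : (2 : ℤ) ≤ n := by exact_mod_cast hn
    nlinarith


/-! ### Prefixes of the periodic word -/

/-- prefixes of the periodic word -/
def wp (n : ℕ) : ℕ → F2
  | 0 => 1
  | k + 1 => wp n k * FreeGroup.of (lw n k)

lemma posW_wp (n k : ℕ) : PosW (wp n k) := by
  induction k with
  | zero => exact PosW.one
  | succ k ih => exact ih.mul (PosW.of _)

lemma flen_of (c : Bool) : flen (FreeGroup.of c) = 1 := flen_lt (c, true)

lemma flen_wp (n k : ℕ) : flen (wp n k) = k := by
  induction k with
  | zero => exact flen_one
  | succ k ih => rw [wp, (posW_wp n k).flen_mul (PosW.of _), ih, flen_of]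

lemma toWord_wp (n k : ℕ) : (wp n k).toWord = (List.range k).map (fun p => (lw n p, true)) := by
  induction k with
  | zero => simp [wp]
  | succ k ih =>
    rw [wp, (posW_wp n k).toWord_mul (PosW.of _), ih, List.range_succ, List.map_append,
      FreeGroup.toWord_of]
    rfl

lemma wp_mul (n K : ℕ) : wp n (K * (n * (n + 1))) = wordW n ^ K := by
  apply FreeGroup.toWord_injective
  rw [toWord_wp, toWord_wpow]

lemma lw_add (n K m : ℕ) : lw n (K * (n * (n + 1)) + m) = lw n m := by
  unfold lw; rw [mul_comm K, Nat.mul_add_mod]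

lemma wp_add (n K m : ℕ) : wp n (K * (n * (n + 1)) + m) = wordW n ^ K * wp n m := by
  induction m with
  | zero => rw [add_zero, wp_mul]; simp [wp]
  | succ m ih => rw [← add_assoc, wp, ih, wp, lw_add, mul_assoc]

lemma wp_run {n k : ℕ} {c : Bool} (m : ℕ) (h : ∀ j < m, lw n (k + j) = c) :
    wp n (k + m) = wp n k * FreeGroup.of c ^ m := by
  induction m with
  | zero => simp
  | succ m ih =>
    rw [← add_assoc, wp, ih (fun j hj => h j (by omega)), h m (by omega), pow_succ, mul_assoc]

lemma d_wp (n k m : ℕ) : d (wp n k) (wp n (k + m)) = m := by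
  have h : ∃ z, PosW z ∧ wp n (k + m) = wp n k * z ∧ flen z = m := by
    induction m with
    | zero => exact ⟨1, PosW.one, by simp, flen_one⟩
    | succ m ih =>
      obtain ⟨z, h1, h2, h3⟩ := ih
      refine ⟨z * FreeGroup.of (lw n (k + m)), h1.mul (PosW.of _), ?_, ?_⟩
      · rw [← add_assoc, wp, h2, mul_assoc]
      · rw [h1.flen_mul (PosW.of _), h3, flen_of]
  obtain ⟨z, h1, h2, h3⟩ := h
  rw [h2]; simp [d, h3]

lemma btw_wp (n k m : ℕ) (h : k ≤ m) : Btw 1 (wp n k) (wp n m) := by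
  obtain ⟨r, rfl⟩ := Nat.exists_eq_add_of_le h
  unfold Btw
  rw [d_one, d_one, flen_wp, flen_wp, d_wp]

lemma initial_wp {n K : ℕ} {p : F2} (h : Btw 1 p (wordW n ^ K)) : p = wp n (flen p) := by
  have hl : flen p ≤ K * (n * (n + 1)) := by
    rw [← flen_wpow]; unfold Btw at h; rw [d_one, d_one] at h; omega
  have h2 := btw_wp n _ _ hl
  rw [wp_mul] at h2
  exact winitial_unique h h2 (by rw [flen_wp])

lemma Fac.left {n K : ℕ} {α γ δ β : F2} (h : Fac n K α (γ * δ) β)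
    (e : flen (γ * δ) = flen γ + flen δ) : flen (α * γ) = flen α + flen γ := by
  have h1 := (h.shift e).2
  have h2 := (h.assoc e).2
  have h3 := flen_mul_le δ β
  have h4 := flen_mul_le α γ
  have h5 := h.2
  omega

lemma Fac.run {n K m : ℕ} {α β : F2} {l : Bool × Bool} (h : Fac n K α (lt l ^ m) β)
    (e : flen (lt l ^ m) = m) : ∀ j < m, l = (lw n (flen α + j), true) := by
  intro j hj
  have h1 := h.letters (j := j) (by omega)
  have h2 : (lt l ^ m).toWord = List.replicate m l := by
    rcases l with ⟨c, s⟩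
    cases s
    · rw [lt_false, inv_pow, FreeGroup.toWord_inv, FreeGroup.toWord_of_pow]
      simp [FreeGroup.invRev]
    · rw [lt_true, FreeGroup.toWord_of_pow]
  rw [h2, List.getElem?_replicate, if_pos hj] at h1
  simpa using h1

lemma flen_lt_pow (l : Bool × Bool) (m : ℕ) : flen (lt l ^ m) ≤ m := by
  induction m with
  | zero => simp [flen_one]
  | succ m ih =>
    have := flen_mul_le (lt l ^ m) (lt l)
    rw [flen_lt] at this
    rw [pow_succ]; omega

lemma Fac.four {n K p q r s : ℕ} {α β : F2} {l1 l2 : Bool × Bool}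
    (h : Fac n K α (lt l1 ^ p * (lt l2 ^ q * (lt l1 ^ r * lt l2 ^ s))) β)
    (e : flen (lt l1 ^ p * (lt l2 ^ q * (lt l1 ^ r * lt l2 ^ s))) = p + q + r + s) :
    (∀ j < p, l1 = (lw n (flen α + j), true)) ∧
    (∀ j < q, l2 = (lw n (flen α + p + j), true)) ∧
    (∀ j < r, l1 = (lw n (flen α + p + q + j), true)) ∧
    (∀ j < s, l2 = (lw n (flen α + p + q + r + j), true)) := by
  have a1 := flen_mul_le (lt l1 ^ p) (lt l2 ^ q * (lt l1 ^ r * lt l2 ^ s))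
  have a2 := flen_mul_le (lt l2 ^ q) (lt l1 ^ r * lt l2 ^ s)
  have a3 := flen_mul_le (lt l1 ^ r) (lt l2 ^ s)
  have b1 := flen_lt_pow l1 p
  have b2 := flen_lt_pow l2 q
  have b3 := flen_lt_pow l1 r
  have b4 := flen_lt_pow l2 s
  have c1 := (h.assoc (by omega)).run (by omega)
  have L1 := h.left (by omega)
  have h2 := h.shift (by omega)
  have c2 := (h2.assoc (by omega)).run (by omega)
  have L2 := h2.left (by omega)
  have h3 := h2.shift (by omega)
  have c3 := (h3.assoc (by omega)).run (by omega)
  have L3 := h3.left (by omega)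
  have h4 := h3.shift (by omega)
  have c4 := h4.run (by omega)
  have e1 : flen (lt l1 ^ p) = p := by omega
  have e2 : flen (lt l2 ^ q) = q := by omega
  have e3 : flen (lt l1 ^ r) = r := by omega
  rw [L3, L2, L1, e1, e2, e3] at c4
  rw [L2, L1, e1, e2] at c3
  rw [L1, e1] at c2
  exact ⟨c1, c2, c3, c4⟩

/-- an interior run of `b`s pins down the location -/
lemma block_loc {n p i : ℕ} (hn : 1 ≤ n) (hi : 1 ≤ i) (h1 : lw n p = true)
    (h2 : ∀ j < i, lw n (p + 1 + j) = false) (h3 : lw n (p + 1 + i) = true) :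
    (p + 1) % (n * (n + 1)) = i * i := by
  obtain ⟨m, m1, m2, m3, m4, m5⟩ := ab_boundary hn h1 (by simpa using h2 0 (by omega))
  have : m = i := block_unique 0 m4 m5 h2 h3 (fun j _ => rfl)
  rw [m3, this]

lemma mod_add_of {p ℓ a j : ℕ} (h : p % ℓ = a) (h2 : a + j < ℓ) : (p + j) % ℓ = a + j := by
  rw [Nat.add_mod, h, Nat.mod_eq_of_lt (show j < ℓ by omega), Nat.mod_eq_of_lt h2]

lemma mod_sub_of {p ℓ a j : ℕ} (h : (p + j) % ℓ = a) (h2 : j ≤ a) (h3 : 0 < ℓ) : p % ℓ = a - j := by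
  have h4 := Nat.mod_lt (p + j) h3
  have h5 := Nat.div_add_mod (p + j) ℓ
  have : p = ℓ * ((p + j) / ℓ) + (a - j) := by omega
  rw [this, Nat.mul_add_mod, Nat.mod_eq_of_lt (by omega)]

lemma W2d {n o i : ℕ} {l1 l2 : Bool × Bool} (hi : 3 ≤ i) (hin : i < n) (hne : l1 ≠ l2)
    (h : (∀ j < 1, l1 = (lw n (o + j), true)) ∧
    (∀ j < i, l2 = (lw n (o + 1 + j), true)) ∧
    (∀ j < i, l1 = (lw n (o + 1 + i + j), true)) ∧
    (∀ j < i + 1, l2 = (lw n (o + 1 + i + i + j), true))) :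
    l2 = (true, true) ∧ l1 = (false, true) ∧ (o + 1) % (n * (n + 1)) = i * i - i := by
  obtain ⟨h1, h2, h3, h4⟩ := h
  have hln : (i + 1) * (i + 1) < n * (n + 1) := by nlinarith
  have hii : 3 * i ≤ i * i := Nat.mul_le_mul_right _ hi
  rcases l1 with ⟨c, s⟩
  rcases l2 with ⟨c', s'⟩
  have e1 := h1 0 (by omega)
  have e2 := h2 0 (by omega)
  simp only [Prod.mk.injEq, ne_eq] at *
  rcases c with _ | _ <;> rcases c' with _ | _
  · exact absurd ⟨rfl, e1.2.trans e2.2.symm⟩ hne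
  · refine ⟨⟨rfl, e2.2⟩, ⟨rfl, e1.2⟩, ?_⟩
    have := block_loc (n := n) (p := o + i) (i := i) (by omega) (by omega)
      (by have := (h2 (i - 1) (by omega)).1; rw [this]; congr 1; omega)
      (fun j hj => by have := (h3 j hj).1; rw [this]; congr 1; omega)
      (by have := (h4 0 (by omega)).1; rw [this]; congr 1; omega)
    exact mod_sub_of (j := i) (by rw [← this]; congr 1; omega) (by omega) (by omega)
  · exfalso
    have := block_loc (n := n) (p := o) (i := i) (by omega) (by omega)
      (by simpa using e1.1.symm)
      (fun j hj => (h2 j hj).1.symm)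
      (by simpa using (h3 0 (by omega)).1.symm)
    have h5 := mod_add_of (j := 2 * i) this (by nlinarith)
    have h6 := isAb_true (i := i) (r := i * i + 2 * i) (by nlinarith) (by nlinarith)
    have h7 := (h4 0 (by omega)).1
    unfold lw at h7
    rw [show o + 1 + i + i + 0 = o + 1 + 2 * i by omega, h5, h6] at h7
    simp at h7
  · exact absurd ⟨rfl, e1.2.trans e2.2.symm⟩ hne

lemma W2i {n o i : ℕ} {l1 l2 : Bool × Bool} (hi : 3 ≤ i) (hin : i < n) (hne : l1 ≠ l2)
    (h : (∀ j < i + 1, l1 = (lw n (o + j), true)) ∧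
    (∀ j < i, l2 = (lw n (o + (i + 1) + j), true)) ∧
    (∀ j < i, l1 = (lw n (o + (i + 1) + i + j), true)) ∧
    (∀ j < 1, l2 = (lw n (o + (i + 1) + i + i + j), true))) : False := by
  obtain ⟨h1, h2, h3, h4⟩ := h
  have hln : (i + 1) * (i + 1) < n * (n + 1) := by nlinarith
  have hii : 3 * i ≤ i * i := Nat.mul_le_mul_right _ hi
  rcases l1 with ⟨c, s⟩
  rcases l2 with ⟨c', s'⟩
  have e1 := h1 0 (by omega)
  have e2 := h2 0 (by omega)
  simp only [Prod.mk.injEq, ne_eq] at *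
  rcases c with _ | _ <;> rcases c' with _ | _
  · exact hne ⟨rfl, e1.2.trans e2.2.symm⟩
  · have := block_loc (n := n) (p := o + i + i) (i := i) (by omega) (by omega)
      (by have := (h2 (i - 1) (by omega)).1; rw [this]; congr 1; omega)
      (fun j hj => by have := (h3 j hj).1; rw [this]; congr 1; omega)
      (by have := (h4 0 (by omega)).1; rw [this]; congr 1; omega)
    have h5 := mod_sub_of (p := o) (ℓ := n * (n + 1)) (a := i * i) (j := 2 * i + 1) (by rw [← this]; congr 1; omega) (by omega) (by omega)
    obtain ⟨k, rfl⟩ : ∃ k, i = k + 2 := ⟨i - 2, by omega⟩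
    have h6 := isAb_true (i := k) (r := (k + 2) * (k + 2) - (2 * (k + 2) + 1))
      (by have : (k + 2) * (k + 2) = k * (k + 1) + (3 * k + 4) := by ring
          omega)
      (by have : (k + 2) * (k + 2) = (k + 1) * (k + 1) + (2 * k + 3) := by ring
          omega)
    have h7 := e1.1
    unfold lw at h7
    rw [add_zero, h5, h6] at h7
    simp at h7
  · have := block_loc (n := n) (p := o + i) (i := i) (by omega) (by omega)
      (by have := (h1 i (by omega)).1; rw [this])
      (fun j hj => by have := (h2 j hj).1; rw [this]; congr 1)
      (by have := (h3 0 (by omega)).1; rw [this]; congr 1)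
    have h5 := mod_add_of (j := 2 * i) this (by nlinarith)
    have h6 := isAb_true (i := i) (r := i * i + 2 * i) (by nlinarith) (by nlinarith)
    have h7 := (h4 0 (by omega)).1
    unfold lw at h7
    rw [show o + (i + 1) + i + i + 0 = o + i + 1 + 2 * i by omega, h5, h6] at h7
    simp at h7
  · exact hne ⟨rfl, e1.2.trans e2.2.symm⟩


/-! ### Tree lemmas -/

lemma btw_or {p v q : F2} (z : F2) (h : Btw p v q) : Btw p v z ∨ Btw z v q := by
  unfold Btw at *
  have h1 := four_pt p q v z
  have h2 := d_triangle p v z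
  have h3 := d_triangle z v q
  rw [d_comm q z, d_comm q v] at h1
  have := d_comm v z
  omega

lemma btw_end {e p v q : F2} (h : Btw e v q) (h2 : d e p ≤ d e v) : Btw p v q := by
  rcases btw_or p h with h3 | h3
  · unfold Btw at h3
    have : v = p := d_eq_zero (by omega)
    subst this
    unfold Btw; rw [d_self]; omega
  · exact h3

lemma seg {e v v' E : F2} (h : Btw e v E) (h' : Btw e v' E) (hl : d e v ≤ d e v') :
    d e v + d v v' = d e v' := by
  unfold Btw at *
  have h1 := four_pt v v' e E
  have h2 := d_triangle e v v'
  rw [d_comm v e, d_comm v' e] at h1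
  omega

lemma near_btw {Zm Zp p q v : F2} {C : ℕ} (hp : d Zm p + d p Zp ≤ d Zm Zp + 2 * C)
    (hq : d Zm q + d q Zp ≤ d Zm Zp + 2 * C) (h : Btw p v q) (h1 : C < d p v) (h2 : C < d v q) :
    Btw Zm v Zp := by
  have t := d_triangle Zm v Zp
  rcases btw_or Zm h with a | a <;> rcases btw_or Zp h with b | b
  · exfalso
    unfold Btw at a b
    rw [d_comm Zm p, ← a, ← b, d_comm v Zm] at hp
    omega
  · rcases btw_or Zp a with c | c
    · exfalso
      unfold Btw at a c
      rw [d_comm Zm p, ← a, ← c, d_comm v Zm] at hp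
      omega
    · exact c.symm
  · rcases btw_or Zm b with c | c
    · exfalso
      unfold Btw at b c
      rw [d_comm Zm p, ← b, ← c, d_comm v Zm] at hp
      omega
    · exact c
  · exfalso
    unfold Btw at a b
    rw [d_comm q Zp, ← a, ← b, d_comm Zp v] at hq
    omega

/-- near the axis of `κ w κ⁻¹` -/
def Nr (n : ℕ) (κ : F2) (C : ℕ) (p : F2) : Prop := ∀ N : ℕ, 1 ≤ N →
  d (κ * wordW n ^ N * κ⁻¹)⁻¹ p + d p (κ * wordW n ^ N * κ⁻¹) ≤
    d (κ * wordW n ^ N * κ⁻¹)⁻¹ (κ * wordW n ^ N * κ⁻¹) + 2 * C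

lemma Nr.mid {n C : ℕ} {κ p q v : F2} (hp : Nr n κ C p) (hq : Nr n κ C q) (h : Btw p v q)
    (h1 : C < d p v) (h2 : C < d v q) : Nr n κ 0 v := by
  intro N hN
  have := near_btw (hp N hN) (hq N hN) h h1 h2
  unfold Btw at this
  omega

lemma Nr.ax {n N : ℕ} {κ v : F2} (hn : 1 ≤ n) (h : Nr n κ 0 v) (hN : 3 * flen κ + flen v + 1 ≤ N) :
    Btw 1 (wordW n ^ N * κ⁻¹ * v) (wordW n ^ (2 * N)) := by
  have hl : N ≤ flen (wordW n ^ N) := by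
    rw [flen_wpow]; have : 1 ≤ n * (n + 1) := by nlinarith
    exact Nat.le_mul_of_pos_right _ this
  have hb : Btw (κ * wordW n ^ N * κ⁻¹)⁻¹ v (κ * wordW n ^ N * κ⁻¹) := by
    have h1 := h N (by omega)
    have h2 := d_triangle (κ * wordW n ^ N * κ⁻¹)⁻¹ v (κ * wordW n ^ N * κ⁻¹)
    unfold Btw; omega
  have e1 : d (κ * wordW n ^ N * κ⁻¹)⁻¹ (κ * (wordW n ^ N)⁻¹) = flen κ := by
    unfold d; congr 1; group
  have e2 : d (κ * wordW n ^ N * κ⁻¹) (κ * wordW n ^ N) = flen κ := by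
    unfold d; congr 1; group
  have L : N ≤ flen (κ * wordW n ^ N * κ⁻¹) + 2 * flen κ := by
    have a1 := flen_mul_le κ⁻¹ (κ * wordW n ^ N * κ⁻¹)
    have a2 := flen_mul_le (κ⁻¹ * (κ * wordW n ^ N * κ⁻¹)) κ
    have : κ⁻¹ * (κ * wordW n ^ N * κ⁻¹) * κ = wordW n ^ N := by group
    rw [this] at a2
    rw [flen_inv] at a1
    omega
  have f1 : flen κ ≤ d (κ * wordW n ^ N * κ⁻¹)⁻¹ v := by
    have := d_triangle (κ * wordW n ^ N * κ⁻¹)⁻¹ v 1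
    rw [d_one_right, d_one_right, flen_inv] at this
    omega
  have f2 : flen κ ≤ d (κ * wordW n ^ N * κ⁻¹) v := by
    have := d_triangle (κ * wordW n ^ N * κ⁻¹) v 1
    rw [d_one_right, d_one_right] at this
    omega
  have b1 := btw_end hb (p := κ * (wordW n ^ N)⁻¹) (by rw [e1]; exact f1)
  have b2 := (btw_end b1.symm (p := κ * wordW n ^ N) (by rw [e2]; exact f2)).symm
  have b3 := b2.mul_left (wordW n ^ N * κ⁻¹)
  have g1 : wordW n ^ N * κ⁻¹ * (κ * (wordW n ^ N)⁻¹) = 1 := by group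
  have g2 : wordW n ^ N * κ⁻¹ * (κ * wordW n ^ N) = wordW n ^ (2 * N) := by
    rw [two_mul, pow_add]; group
  rw [g1, g2] at b3
  exact b3

lemma fac_of_btw {n K : ℕ} {α α' : F2} (h : Btw 1 α (wordW n ^ K)) (h' : Btw 1 α' (wordW n ^ K))
    (hl : flen α ≤ flen α') : Fac n K α (α⁻¹ * α') (α'⁻¹ * wordW n ^ K) := by
  refine ⟨by group, ?_⟩
  have := seg h h' (by simpa [d_one] using hl)
  unfold Btw at h'
  simp only [d_one] at *
  unfold d at this h'
  omega

lemma Nr.pair {n : ℕ} {κ v v' : F2} (hn : 1 ≤ n) (h : Nr n κ 0 v) (h' : Nr n κ 0 v') :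
    ∃ N β, Fac n (2 * N) (wordW n ^ N * κ⁻¹ * v) (v⁻¹ * v') β ∨
      Fac n (2 * N) (wordW n ^ N * κ⁻¹ * v') (v⁻¹ * v')⁻¹ β := by
  obtain ⟨N, hN1, hN2⟩ : ∃ N, 3 * flen κ + flen v + 1 ≤ N ∧ 3 * flen κ + flen v' + 1 ≤ N :=
    ⟨3 * flen κ + flen v + flen v' + 1, by omega, by omega⟩
  have a := h.ax hn hN1
  have a' := h'.ax hn hN2
  refine ⟨N, ?_⟩
  rcases le_total (flen (wordW n ^ N * κ⁻¹ * v)) (flen (wordW n ^ N * κ⁻¹ * v')) with hl | hl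
  · have := fac_of_btw a a' hl
    have e : (wordW n ^ N * κ⁻¹ * v)⁻¹ * (wordW n ^ N * κ⁻¹ * v') = v⁻¹ * v' := by group
    rw [e] at this
    exact ⟨_, Or.inl this⟩
  · have := fac_of_btw a' a hl
    have e : (wordW n ^ N * κ⁻¹ * v')⁻¹ * (wordW n ^ N * κ⁻¹ * v) = (v⁻¹ * v')⁻¹ := by group
    rw [e] at this
    exact ⟨_, Or.inr this⟩

lemma len_one {n C : ℕ} {κ p A : F2} (hn : 2 ≤ n) (hp : Nr n κ C p) (hq : Nr n κ C (p * A ^ 9))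
    (hA : ∀ i, flen (A ^ i) = i * flen A) (hC : C < 3 * flen A) (ρ : F2 →* Multiplicative ℤ)
    (hρ : (ρ A).toAdd = 1) : flen A = 1 := by
  have dA : ∀ i j, d (p * A ^ i) (p * A ^ (i + j)) = j * flen A := by
    intro i j
    rw [d_mul_left]; unfold d; rw [pow_add, inv_mul_cancel_left, hA]
  have d3 := dA 0 3
  have d6 := dA 0 6
  have d9 := dA 0 9
  have d36 := dA 3 6
  have d63 := dA 6 3
  simp only [pow_zero, mul_one, zero_add] at d3 d6 d9
  norm_num at d36 d63
  have n3 := hp.mid hq (v := p * A ^ 3) (by unfold Btw; omega) (by omega) (by omega)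
  have n6 := hp.mid hq (v := p * A ^ 6) (by unfold Btw; omega) (by omega) (by omega)
  obtain ⟨N, β, h | h⟩ := n3.pair (by omega) n6
  · have e : (p * A ^ 3)⁻¹ * (p * A ^ 6) = A ^ 3 := by group
    rw [e] at h
    exact W1 hn h (hA 3) ρ (Or.inl hρ)
  · have e : ((p * A ^ 3)⁻¹ * (p * A ^ 6))⁻¹ = A⁻¹ ^ 3 := by group
    rw [e] at h
    have := W1 hn h (by rw [inv_pow, flen_inv, flen_inv, hA]) ρ (Or.inr (by simp [hρ]))
    rwa [flen_inv] at this

/-- the test pattern -/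
def pat (i : ℕ) : F2 := genB ^ 1 * (genA ^ i * (genB ^ i * genA ^ (i + 1)))

lemma flen_pat (i : ℕ) : flen (pat i) = 1 + i + i + (i + 1) := by
  unfold pat
  have h1 := posW_a
  have h2 := posW_b
  rw [(h2.pow _).flen_mul ((h1.pow _).mul ((h2.pow _).mul (h1.pow _))),
    (h1.pow _).flen_mul ((h2.pow _).mul (h1.pow _)), (h2.pow _).flen_mul (h1.pow _)]
  simp only [h1.flen_pow, h2.flen_pow, flen_genA, flen_genB]
  ring

/-- exponent sum -/
def chi (x y : ℤ) : F2 →* Multiplicative ℤ :=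
  FreeGroup.lift (fun c => if c then Multiplicative.ofAdd x else Multiplicative.ofAdd y)

lemma partC {n i : ℕ} {ψ : MulAut F2} {κ z0 v1 : F2} (hi : 9 ≤ i) (hin : i < n) (hψ : Tame ψ)
    (hz : ψ z0 = κ * wordW n * κ⁻¹)
    (H : ∀ v ∈ ({v1, v1 * pat i, v1 * genB, v1 * genB * genA ^ 9, v1 * genB * genA ^ i,
      v1 * genB * genA ^ i * genB ^ 9} : Set F2), ∀ N : ℕ, 1 ≤ N → Btw (z0 ^ N)⁻¹ v (z0 ^ N)) :
    z0 = (v1 * genB * (wp n (i * i - i))⁻¹) * wordW n * (v1 * genB * (wp n (i * i - i))⁻¹)⁻¹ := by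
  have hz' : ∀ N : ℕ, ψ (z0 ^ N) = κ * wordW n ^ N * κ⁻¹ := by
    intro N
    rw [map_pow, hz, conj_pow]
  have nr : ∀ v ∈ ({v1, v1 * pat i, v1 * genB, v1 * genB * genA ^ 9, v1 * genB * genA ^ i,
      v1 * genB * genA ^ i * genB ^ 9} : Set F2), Nr n κ (tot ψ) (ψ v) := by
    intro v hv N hN
    have := hψ.btw (H v hv N hN)
    rw [map_inv, hz'] at this
    exact this
  have posA := flen_pos (aut_ne_one ψ genA_ne_one)
  have posB := flen_pos (aut_ne_one ψ genB_ne_one)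
  have hS : Sgn ψ := by
    rcases le_total (flen (ψ genB)) (flen (ψ genA)) with hl | hl
    · have := len_one (A := ψ genA) (p := ψ (v1 * genB)) (C := tot ψ) (by omega) (nr _ (by simp))
        (by have := nr (v1 * genB * genA ^ 9) (by simp)
            rw [map_mul, map_pow] at this; exact this)
        hψ.pa (by unfold tot; omega) ((chi 1 0).comp (ψ⁻¹ : MulAut F2).toMonoidHom)
        (by simp [chi, genA])
      exact ⟨this, by omega⟩
    · have := len_one (A := ψ genB) (p := ψ (v1 * genB * genA ^ i)) (C := tot ψ) (by omega) (nr _ (by simp))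
        (by have := nr (v1 * genB * genA ^ i * genB ^ 9) (by simp)
            rw [map_mul, map_pow] at this; exact this)
        hψ.pb (by unfold tot; omega) ((chi 0 1).comp (ψ⁻¹ : MulAut F2).toMonoidHom)
        (by simp [chi, genB])
      exact ⟨by omega, this⟩
  have ex : ∀ v ∈ ({v1, v1 * pat i, v1 * genB, v1 * genB * genA ^ 9, v1 * genB * genA ^ i,
      v1 * genB * genA ^ i * genB ^ 9} : Set F2), Nr n κ 0 (ψ v) := by
    intro v hv N hN
    have := H v hv N hN
    rw [← hz', ← map_inv, hS.d_eq, hS.d_eq, hS.d_eq]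
    unfold Btw at this
    omega
  obtain ⟨la, hla⟩ := exists_lt hS.1
  obtain ⟨lb, hlb⟩ := exists_lt hS.2
  have hne : la ≠ lb := by
    rintro rfl
    exact genA_ne_genB (ψ.injective (hla.trans hlb.symm))
  have ep : (ψ v1)⁻¹ * ψ (v1 * pat i) = lt lb ^ 1 * (lt la ^ i * (lt lb ^ i * lt la ^ (i + 1))) := by
    rw [map_mul, inv_mul_cancel_left, pat]
    simp only [map_mul, map_pow, hla, hlb]
  have el : flen ((ψ v1)⁻¹ * ψ (v1 * pat i)) = 1 + i + i + (i + 1) := by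
    rw [map_mul, inv_mul_cancel_left, hS.iso, flen_pat]
  obtain ⟨N, β, h | h⟩ := (ex v1 (by simp)).pair (by omega) (ex (v1 * pat i) (by simp))
  · rw [ep] at h el
    obtain ⟨r1, r2, r3⟩ := W2d (by omega) hin hne.symm (h.four el)
    have hid : ψ = 1 := by
      apply aut_ext
      · rw [hla, r1]; rfl
      · rw [hlb, r2]; rfl
    subst hid
    simp only [MulAut.one_apply] at *
    have c1 := h
    have a1 := flen_mul_le (lt lb ^ 1) (lt la ^ i * (lt lb ^ i * lt la ^ (i + 1)))
    have a2 := flen_mul_le (lt la ^ i) (lt lb ^ i * lt la ^ (i + 1))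
    have a3 := flen_mul_le (lt lb ^ i) (lt la ^ (i + 1))
    have b1 := flen_lt_pow lb 1
    have b2 := flen_lt_pow la i
    have b3 := flen_lt_pow lb i
    have b4 := flen_lt_pow la (i + 1)
    have L := h.left (by omega)
    have s := (h.shift (by omega)).btw1
    have e := initial_wp s
    rw [L, show flen (lt lb ^ 1) = 1 by omega] at e
    obtain ⟨q, hq⟩ : ∃ q, flen (wordW n ^ N * κ⁻¹ * v1) + 1 = q * (n * (n + 1)) + (i * i - i) :=
      ⟨(flen (wordW n ^ N * κ⁻¹ * v1) + 1) / (n * (n + 1)), by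
        rw [← r3, mul_comm, Nat.div_add_mod]⟩
    rw [hq, wp_add, pow_one, ← hlb] at e
    have hκ : v1 * genB * (wp n (i * i - i))⁻¹ = κ * (wordW n ^ N)⁻¹ * wordW n ^ q := by
      have : v1 * genB = κ * (wordW n ^ N)⁻¹ * (wordW n ^ N * κ⁻¹ * v1 * genB) := by group
      rw [this, e]; group
    rw [hκ, hz]
    group
  · exfalso
    have ei : ((ψ v1)⁻¹ * ψ (v1 * pat i))⁻¹ = lt (la.1, !la.2) ^ (i + 1) *
        (lt (lb.1, !lb.2) ^ i * (lt (la.1, !la.2) ^ i * lt (lb.1, !lb.2) ^ 1)) := by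
      rw [ep]
      rcases la with ⟨c, s⟩
      rcases lb with ⟨c', s'⟩
      simp only [← lt_inv]
      simp only [inv_pow, mul_inv_rev, mul_assoc]
    rw [← flen_inv, ei] at el
    rw [ei] at h
    refine W2i (by omega) hin ?_ (h.four (by rw [el]; omega))
    intro he
    apply hne
    rcases la with ⟨c, s⟩
    rcases lb with ⟨c', s'⟩
    simp at he ⊢
    exact he


/-! ### Length estimates -/

lemma Tame.superadd {η : MulAut F2} (h : Tame η) {p q : F2} (e : flen (p * q) = flen p + flen q) :
    flen (η p) + flen (η q) ≤ flen (η (p * q)) + 2 * tot η := by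
  have := h.btw (btw_mul.2 e)
  rw [map_one, d_one, d_one] at this
  have e2 : d (η p) (η (p * q)) = flen (η q) := by simp [d]
  rwa [e2] at this

lemma Tame.wordW_le {η : MulAut F2} (h : Tame η) (m : ℕ) :
    m * (m + 1) * tot η ≤ 2 * flen (η (wordW m)) + 8 * m * tot η := by
  induction m with
  | zero => simp
  | succ m ih =>
    have pa := posW_a.pow (m + 1)
    have pb := posW_b.pow (m + 1)
    have h1 := h.superadd (pa.flen_mul pb)
    have h2 := h.superadd ((posW_w m).flen_mul (pa.mul pb))
    rw [← wordW_succ] at h2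
    rw [map_pow, map_pow, h.pa, h.pb] at h1
    have h3 : (m + 1) * flen (η genA) + (m + 1) * flen (η genB) = (m + 1) * tot η := by
      unfold tot; ring
    have e1 : (m + 1) * (m + 1 + 1) * tot η = m * (m + 1) * tot η + 2 * ((m + 1) * tot η) := by ring
    have e2 : 8 * (m + 1) * tot η = 8 * m * tot η + 8 * tot η := by ring
    omega

lemma Tame.pow_le {η : MulAut F2} (h : Tame η) (n M : ℕ) :
    M * flen (η (wordW n)) ≤ flen (η (wordW n ^ M)) + M * (2 * tot η) := by
  induction M with
  | zero => simp
  | succ M ih =>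
    have h2 := h.superadd (((posW_w n).pow M).flen_mul (posW_w n))
    rw [← pow_succ] at h2
    have e1 : (M + 1) * flen (η (wordW n)) = M * flen (η (wordW n)) + flen (η (wordW n)) := by ring
    have e2 : (M + 1) * (2 * tot η) = M * (2 * tot η) + 2 * tot η := by ring
    omega

lemma Tame.lower {η : MulAut F2} (h : Tame η) {n : ℕ} {x k : F2}
    (hx : x = η (k * wordW n * k⁻¹)) (hxx : flen (x * x) = 2 * flen x) :
    n * (n + 1) * tot η ≤ 2 * flen x + (8 * n + 4) * tot η := by
  have h1 := h.wordW_le n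
  have key : ∀ M : ℕ, M * flen (η (wordW n)) ≤ M * flen x + 2 * flen (η k) + M * (2 * tot η) := by
    intro M
    have h2 := h.pow_le n M
    have e : η (wordW n ^ M) = (η k)⁻¹ * x ^ M * η k := by
      rw [hx, ← map_pow, conj_pow]; simp only [map_mul, map_inv, map_pow]; group
    have a1 := flen_mul_le ((η k)⁻¹ * x ^ M) (η k)
    have a2 := flen_mul_le (η k)⁻¹ (x ^ M)
    rw [flen_inv, flen_pow hxx] at a2
    rw [e] at h2
    omega
  have h3 : flen (η (wordW n)) ≤ flen x + 2 * tot η := by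
    by_contra hc
    push Not at hc
    have h4 := key (2 * flen (η k) + 1)
    have h5 := Nat.mul_le_mul_left (2 * flen (η k) + 1) (Nat.succ_le_of_lt hc)
    have e : (2 * flen (η k) + 1) * (flen x + 2 * tot η).succ = (2 * flen (η k) + 1) * flen x
      + (2 * flen (η k) + 1) * (2 * tot η) + (2 * flen (η k) + 1) := by
      rw [Nat.succ_eq_add_one]; ring
    omega
  have e : (8 * n + 4) * tot η = 8 * n * tot η + 4 * tot η := by ring
  omega

/-! ### The common window -/

lemma pre_len {x u : F2} (hxx : flen (x * x) = 2 * flen x) (hu : IsInitSeg u x) (M : ℕ) (hM : 1 ≤ M) :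
    d u (x ^ M) + flen u ≤ M * flen x ∧ d (x ^ M)⁻¹ u = M * flen x + flen u := by
  obtain ⟨x', e, l⟩ := hu
  obtain ⟨m, rfl⟩ : ∃ m, M = m + 1 := ⟨M - 1, by omega⟩
  have p1 := flen_pow hxx m
  have p2 := flen_pow hxx (m + 1)
  have p3 := flen_pow hxx (m + 1 + 1)
  have em : (m + 1) * flen x = m * flen x + flen x := by ring
  have em2 : (m + 1 + 1) * flen x = m * flen x + flen x + flen x := by ring
  constructor
  · have e1 : d u (x ^ (m + 1)) = flen (x' * x ^ m) := by
      unfold d; congr 1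
      rw [pow_succ']; nth_rewrite 1 [e]; group
    have := flen_mul_le x' (x ^ m)
    omega
  · have e1 : d (x ^ (m + 1))⁻¹ u = flen (x ^ (m + 1) * u) := by
      unfold d; rw [inv_inv]
    have a1 := flen_mul_le (x ^ (m + 1)) u
    have a2 := flen_mul_le (x ^ (m + 1) * u) x'
    have e2 : x ^ (m + 1) * u * x' = x ^ (m + 1 + 1) := by
      rw [mul_assoc, ← e, ← pow_succ]
    rw [e2] at a2
    omega

lemma lemA {η : MulAut F2} (hη : Tame η) {x0 y0 x y u v : F2} (hx : x = η x0) (hy : y = η y0)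
    (hxx : flen (x * x) = 2 * flen x) (hyy : flen (y * y) = 2 * flen y)
    (hux : IsInitSeg u x) (huy : IsInitSeg u y) {M N : ℕ} (hM : 1 ≤ M) (hN : 1 ≤ N)
    (hv : Btw (x0 ^ M)⁻¹ v (x0 ^ M)) (h1 : flen (η v) + tot η < flen u)
    (h2 : d u (η v) + tot η < flen u) : Btw (y0 ^ N)⁻¹ v (y0 ^ N) := by
  obtain ⟨a1, a2⟩ := pre_len hxx hux M hM
  obtain ⟨b1, b2⟩ := pre_len hyy huy N hN
  have px := flen_pow hxx M
  have py := flen_pow hyy N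
  have ex : η (x0 ^ M) = x ^ M := by rw [map_pow, hx]
  have ey : η (y0 ^ N) = y ^ N := by rw [map_pow, hy]
  have c := d_comm u (η v)
  have c1 : ¬ Btw (x0 ^ M)⁻¹ v (y0 ^ N)⁻¹ := by
    intro hb
    have := hη.btw hb
    rw [map_inv, map_inv, ex, ey] at this
    have t1 := d_triangle (x ^ M)⁻¹ (η v) u
    have t2 := d_triangle (y ^ N)⁻¹ (η v) u
    have t3 := d_triangle (x ^ M)⁻¹ 1 (y ^ N)⁻¹
    rw [d_one, d_one_right, flen_inv, flen_inv] at t3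
    have := d_comm (y ^ N)⁻¹ (η v)
    omega
  have c2 : ¬ Btw (y0 ^ N) v (x0 ^ M) := by
    intro hb
    have := hη.btw hb
    rw [ex, ey] at this
    have t1 := d_triangle (y ^ N) (η v) 1
    have t2 := d_triangle (x ^ M) (η v) 1
    have t3 := d_triangle (y ^ N) u (x ^ M)
    rw [d_one_right, d_one_right] at t1 t2
    have := d_comm (x ^ M) (η v)
    have := d_comm (y ^ N) u
    omega
  rcases btw_or (y0 ^ N)⁻¹ hv with h | h
  · exact absurd h c1
  · rcases btw_or (y0 ^ N) h with h' | h'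
    · exact h'
    · exact absurd h' c2

lemma ivt {f : ℕ → ℤ} {T : ℤ} (L : ℕ) (h0 : f 0 ≤ T) (hL : T < f L) :
    ∃ k < L, f k ≤ T ∧ T < f (k + 1) := by
  induction L with
  | zero => omega
  | succ L ih =>
    by_cases h : T < f L
    · obtain ⟨k, hk, h1⟩ := ih h
      exact ⟨k, by omega, h1⟩
    · exact ⟨L, by omega, by omega, hL⟩

lemma lip (η : MulAut F2) (n : ℕ) (e : F2) (k m : ℕ) :
    d (η (e * wp n k)) (η (e * wp n (k + m))) ≤ tot η * m := by
  induction m with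
  | zero => simp [d_self]
  | succ m ih =>
    have h1 := d_triangle (η (e * wp n k)) (η (e * wp n (k + m))) (η (e * wp n (k + (m + 1))))
    have h2 : d (η (e * wp n (k + m))) (η (e * wp n (k + (m + 1)))) ≤ tot η := by
      have : d (η (e * wp n (k + m))) (η (e * wp n (k + (m + 1)))) = flen (η (FreeGroup.of (lw n (k + m)))) := by
        unfold d; congr 1
        rw [← add_assoc, wp]
        simp only [map_mul]; group
      rw [this]
      unfold tot genA genB
      cases lw n (k + m) <;> omega
    have e : tot η * (m + 1) = tot η * m + tot η := by ring
    omega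

lemma window {η : MulAut F2} (hη : Tame η) {n R : ℕ} {h y0 x y u : F2} (hn : 1 ≤ n)
    (hx : x = η (h * wordW n * h⁻¹)) (hy : y = η y0)
    (hxx : flen (x * x) = 2 * flen x) (hyy : flen (y * y) = 2 * flen y)
    (hux : IsInitSeg u x) (huy : IsInitSeg u y) (hR : tot η * (2 * R + 6) < flen u) :
    ∃ M k0 : ℕ, R ≤ k0 ∧ ∀ k, k0 ≤ k + R → k ≤ k0 + R → ∀ N : ℕ, 1 ≤ N →
      Btw (y0 ^ N)⁻¹ (h * (wordW n ^ M)⁻¹ * wp n k) (y0 ^ N) := by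
  have hul : flen u ≤ flen x := by obtain ⟨_, _, l⟩ := hux; omega
  set G := tot η * (R + flen h) with hG
  obtain ⟨M, hM⟩ : ∃ M, M = flen (η h) + G + 1 := ⟨_, rfl⟩
  set e := h * (wordW n ^ M)⁻¹ with he
  set L := (2 * M) * (n * (n + 1)) with hL
  have eL : e * wp n L = (h * wordW n * h⁻¹) ^ M * h := by
    rw [hL, wp_mul, he, conj_pow, two_mul, pow_add]; group
  have e0 : e * wp n 0 = ((h * wordW n * h⁻¹) ^ M)⁻¹ * h := by
    rw [he, conj_pow, wp]; group
  have ex : η ((h * wordW n * h⁻¹) ^ M) = x ^ M := by rw [map_pow, hx]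
  have px := flen_pow hxx M
  have pxx := flen_pow hxx (M + M)
  have dxx : d (x ^ M)⁻¹ (x ^ M) = 2 * (M * flen x) := by
    unfold d; rw [inv_inv, ← pow_add, pxx]; ring
  have d0 : d (x ^ M)⁻¹ (η (e * wp n 0)) = flen (η h) := by
    rw [e0, map_mul, map_inv, ex]; simp [d]
  have dL : d (x ^ M) (η (e * wp n L)) = flen (η h) := by
    rw [eL, map_mul, ex]; simp [d]
  have hMx : M - 1 + flen x ≤ M * flen x := by
    have : 1 ≤ flen x := by omega
    obtain ⟨m, rfl⟩ : ∃ m, M = m + 1 := ⟨M - 1, by omega⟩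
    rw [Nat.add_mul]
    have := Nat.le_mul_of_pos_right m this
    omega
  obtain ⟨f, hf⟩ : ∃ f : ℕ → ℤ, ∀ k, f k = (d (x ^ M)⁻¹ (η (e * wp n k)) : ℤ) - d (η (e * wp n k)) (x ^ M) :=
    ⟨_, fun k => rfl⟩
  have flip : ∀ k m, f (k + m) ≤ f k + 2 * ((tot η * m : ℕ) : ℤ) ∧ f k ≤ f (k + m) + 2 * ((tot η * m : ℕ) : ℤ) := by
    intro k m
    rw [hf, hf]
    have l := lip η n e k m
    have t1 := d_triangle (x ^ M)⁻¹ (η (e * wp n k)) (η (e * wp n (k + m)))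
    have t2 := d_triangle (η (e * wp n k)) (η (e * wp n (k + m))) (x ^ M)
    have t3 := d_triangle (x ^ M)⁻¹ (η (e * wp n (k + m))) (η (e * wp n k))
    have t4 := d_triangle (η (e * wp n (k + m))) (η (e * wp n k)) (x ^ M)
    have c := d_comm (η (e * wp n (k + m))) (η (e * wp n k))
    omega
  have f0 : f 0 ≤ 2 * flen (η h) - 2 * ((M * flen x : ℕ) : ℤ) := by
    rw [hf]
    have t := d_triangle (x ^ M)⁻¹ (η (e * wp n 0)) (x ^ M)
    omega
  have fL : 2 * ((M * flen x : ℕ) : ℤ) - 2 * flen (η h) ≤ f L := by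
    rw [hf]
    have t := d_triangle (x ^ M)⁻¹ (η (e * wp n L)) (x ^ M)
    have := d_comm (x ^ M) (η (e * wp n L))
    omega
  obtain ⟨k0, k0L, hk1, hk2⟩ := ivt (f := f) (T := flen u) L (by omega) (by omega)
  have lo : R + flen h ≤ k0 := by
    by_contra hc
    push Not at hc
    have q := Nat.mul_le_mul_left (tot η) (show k0 + 1 ≤ R + flen h by omega)
    have q2 := (flip 0 (k0 + 1)).1
    rw [zero_add] at q2
    omega
  have hi : k0 + (R + flen h) ≤ L := by
    by_contra hc
    push Not at hc
    have q := Nat.mul_le_mul_left (tot η) (show L - k0 ≤ R + flen h by omega)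
    have q2 := (flip k0 (L - k0)).1
    rw [show k0 + (L - k0) = L by omega] at q2
    omega
  refine ⟨M, k0, by omega, ?_⟩
  intro k hk hk' N hN
  rw [← he]
  have hax : Btw ((h * wordW n * h⁻¹) ^ M)⁻¹ (e * wp n k) ((h * wordW n * h⁻¹) ^ M) := by
    have b0 := (btw_wp n k L (by omega)).mul_left e
    have w0 : e * 1 = e * wp n 0 := rfl
    rw [w0] at b0
    have b1 := btw_end b0 (p := ((h * wordW n * h⁻¹) ^ M)⁻¹) (by
      rw [d_mul_left]
      have := d_wp n 0 k
      rw [zero_add] at this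
      rw [this, e0]
      have : d (((h * wordW n * h⁻¹) ^ M)⁻¹ * h) ((h * wordW n * h⁻¹) ^ M)⁻¹ = flen h := by
        rw [d_comm]; unfold d; rw [inv_mul_cancel_left]
      omega)
    have b2 := btw_end b1.symm (p := (h * wordW n * h⁻¹) ^ M) (by
      rw [d_mul_left]
      have := d_wp n k (L - k)
      rw [show k + (L - k) = L by omega] at this
      rw [d_comm (wp n L), this, eL]
      have : d ((h * wordW n * h⁻¹) ^ M * h) ((h * wordW n * h⁻¹) ^ M) = flen h := by
        rw [d_comm]; unfold d; rw [inv_mul_cancel_left]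
      omega)
    exact b2.symm
  have ax2 := hη.btw hax
  rw [map_inv, ex, dxx] at ax2
  have c0 : f k0 ≤ f k + 2 * ((tot η * R : ℕ) : ℤ) ∧ f k ≤ f k0 + 2 * ((tot η * R : ℕ) : ℤ) := by
    rcases le_total k k0 with hl | hl
    · have q2 := flip k (k0 - k)
      rw [show k + (k0 - k) = k0 by omega] at q2
      have q := Nat.mul_le_mul_left (tot η) (show k0 - k ≤ R by omega)
      omega
    · have q2 := flip k0 (k - k0)
      rw [show k0 + (k - k0) = k by omega] at q2
      have q := Nat.mul_le_mul_left (tot η) (show k - k0 ≤ R by omega)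
      omega
  have c1 := (flip k0 1).1
  have hR' : tot η * (2 * R + 6) = 2 * (tot η * R) + 6 * tot η := by ring
  rw [hR'] at hR
  rw [mul_one] at c1
  have hfk := hf k
  obtain ⟨a1, a2⟩ := pre_len hxx hux M (by omega)
  have q1 := four_pt 1 (η (e * wp n k)) (x ^ M)⁻¹ (x ^ M)
  have q2 := four_pt u (η (e * wp n k)) (x ^ M)⁻¹ (x ^ M)
  have g1 := d_comm (η (e * wp n k)) (x ^ M)⁻¹
  have g2 := d_comm u (x ^ M)⁻¹
  rw [d_one, d_one, d_one, flen_inv] at q1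
  exact lemA hη rfl hy (hx ▸ hxx) hyy (hx ▸ hux) huy (M := M) (by omega) hN hax (by omega) (by omega)


/-! ### Locating the pattern -/

lemma pat_letters {n t q k1 : ℕ} (ht : 1 ≤ t) (htn : t + 2 ≤ n)
    (hk : k1 + 1 = q * (n * (n + 1)) + t * (t + 1)) :
    lw n k1 = false ∧ (∀ j < t + 1, lw n (k1 + 1 + j) = true) ∧
    (∀ j < t + 1, lw n (k1 + 1 + (t + 1) + j) = false) ∧
    (∀ j < t + 2, lw n (k1 + 1 + (t + 1) + (t + 1) + j) = true) := by
  have hl : (t + 2) * (t + 2) ≤ n * n := Nat.mul_le_mul htn htn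
  have hl2 : n * n < n * (n + 1) := by nlinarith
  have e1 : (t + 2) * (t + 2) = t * (t + 1) + 3 * t + 4 := by ring
  have e2 : (t + 1) * (t + 1) = t * (t + 1) + t + 1 := by ring
  have e3 : (t + 1) * (t + 1 + 1) = t * (t + 1) + 2 * t + 2 := by ring
  have e4 : t * (t + 1) = t * t + t := by ring
  have e5 : (t + 1 + 1) * (t + 1 + 1) = t * (t + 1) + 3 * t + 4 := by ring
  have key : ∀ p m, p = q * (n * (n + 1)) + m → m < n * (n + 1) → lw n p = isAb m := by
    intro p m hp hm
    rw [hp, lw_add]; unfold lw; rw [Nat.mod_eq_of_lt hm]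
  refine ⟨?_, ?_, ?_, ?_⟩
  · rw [key k1 (t * (t + 1) - 1) (by omega) (by omega)]
    exact isAb_false (i := t) (by omega) (by omega)
  · intro j hj
    rw [key _ (t * (t + 1) + j) (by omega) (by omega)]
    exact isAb_true (i := t) (by omega) (by omega)
  · intro j hj
    rw [key _ (t * (t + 1) + (t + 1) + j) (by omega) (by omega)]
    exact isAb_false (i := t + 1) (by omega) (by omega)
  · intro j hj
    rw [key _ (t * (t + 1) + (t + 1) + (t + 1) + j) (by omega) (by omega)]
    exact isAb_true (i := t + 1) (by omega) (by omega)

lemma pat_points {n t q k1 : ℕ} (ht : 8 ≤ t) (htn : t + 2 ≤ n)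
    (hk : k1 + 1 = q * (n * (n + 1)) + t * (t + 1)) :
    wp n (k1 + 1) = wp n k1 * genB ∧
    wp n (k1 + 1 + 9) = wp n k1 * genB * genA ^ 9 ∧
    wp n (k1 + 1 + (t + 1)) = wp n k1 * genB * genA ^ (t + 1) ∧
    wp n (k1 + 1 + (t + 1) + 9) = wp n k1 * genB * genA ^ (t + 1) * genB ^ 9 ∧
    wp n (k1 + 1 + (t + 1) + (t + 1) + (t + 2)) = wp n k1 * pat (t + 1) := by
  obtain ⟨h1, h2, h3, h4⟩ := pat_letters (by omega) htn hk
  have r1 : wp n (k1 + 1) = wp n k1 * genB := by rw [wp, h1]; rfl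
  have r2 := wp_run 9 (fun j hj => h2 j (by omega))
  have r3 := wp_run (t + 1) h2
  have r4 := wp_run 9 (fun j hj => h3 j (by omega))
  have r5 := wp_run (t + 1) h3
  have r6 := wp_run (t + 2) h4
  rw [r1] at r2 r3
  rw [r3] at r4 r5
  rw [r5] at r6
  refine ⟨r1, r2, r3, r4, ?_⟩
  rw [r6, pat]
  simp only [genA, genB, pow_one, mul_assoc]

lemma pat_exists {n k0 : ℕ} (hn : 101 < n) : ∃ t q k1, 8 ≤ t ∧ t + 2 ≤ n ∧
    k1 + 1 = q * (n * (n + 1)) + t * (t + 1) ∧ k0 ≤ k1 + (3 * n + 5) ∧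
    k1 + 1 + (t + 1) + (t + 1) + (t + 2) ≤ k0 + (3 * n + 5) := by
  have hl : 0 < n * (n + 1) := by positivity
  have hr := Nat.mod_lt k0 hl
  have hdm := Nat.div_add_mod k0 (n * (n + 1))
  rw [mul_comm] at hdm
  generalize k0 / (n * (n + 1)) = q at *
  generalize k0 % (n * (n + 1)) = r at *
  have ln : n * (n + 1) = n * n + n := by ring
  by_cases hr90 : r ≤ 90
  · exact ⟨9, q, q * (n * (n + 1)) + 89, by omega, by omega, by omega, by omega, by omega⟩
  push Not at hr90
  have b2 : ∀ i, 1 ≤ i → (i - 1) * (i - 1 + 1) + i = i * i := by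
    intro i hi
    obtain ⟨k, rfl⟩ : ∃ k, i = k + 1 := ⟨i - 1, by omega⟩
    simp; ring
  rcases isAb_cases r with ⟨i, a1, a2, -⟩ | ⟨i, a1, a2, -⟩
  · have i9 : 9 ≤ i := by
      by_contra hc
      have : i + 1 ≤ 9 := by omega
      have := Nat.mul_le_mul this this
      omega
    have iN : i < n := by
      by_contra hc; push Not at hc
      have : n * (n + 1) ≤ i * (i + 1) := Nat.mul_le_mul hc (by omega)
      omega
    have b := b2 i (by omega)
    have c3 : 9 * i ≤ i * i := Nat.mul_le_mul_right i (by omega)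
    have c4 : 1 ≤ (i - 1) * (i - 1 + 1) := by omega
    have c1 : i * (i + 1) = i * i + i := by ring
    have c2 : (i + 1) * (i + 1) = i * i + 2 * i + 1 := by ring
    exact ⟨i - 1, q, q * (n * (n + 1)) + ((i - 1) * (i - 1 + 1) - 1), by omega, by omega,
      (by rw [add_assoc, Nat.sub_add_cancel c4]),
      by omega, by omega⟩
  · have i9 : 10 ≤ i := by
      by_contra hc
      have h1 : i ≤ 9 := by omega
      have := Nat.mul_le_mul h1 (show i + 1 ≤ 10 by omega)
      omega
    have iN : i ≤ n := by
      by_contra hc; push Not at hc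
      have : (n + 1) * (n + 1) ≤ i * i := Nat.mul_le_mul hc hc
      have : (n + 1) * (n + 1) = n * n + n + n + 1 := by ring
      omega
    have b := b2 i (by omega)
    have c3 : 9 * i ≤ i * i := Nat.mul_le_mul_right i (by omega)
    have c4 : 1 ≤ (i - 1) * (i - 1 + 1) := by omega
    have c1 : i * (i + 1) = i * i + i := by ring
    rcases Nat.lt_or_eq_of_le iN with hlt | heq
    · exact ⟨i - 1, q, q * (n * (n + 1)) + ((i - 1) * (i - 1 + 1) - 1), by omega, by omega,
      (by rw [add_assoc, Nat.sub_add_cancel c4]),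
        by omega, by omega⟩
    · subst heq
      have : (q + 1) * (i * (i + 1)) = q * (i * (i + 1)) + i * (i + 1) := by ring
      exact ⟨9, q + 1, (q + 1) * (i * (i + 1)) + 89, by omega, by omega, by omega, by omega, by omega⟩

/-! ### The main argument -/

lemma main_tame {η η' : MulAut F2} (hη : Tame η) {n : ℕ} (hn : 101 < n) {h κ x y z u : F2}
    (hx : x = η (h * wordW n * h⁻¹)) (hz : z = y ∨ z = y⁻¹) (hzκ : z = η' (κ * wordW n * κ⁻¹))
    (hxx : flen (x * x) = 2 * flen x) (hyy : flen (y * y) = 2 * flen y)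
    (hux : IsInitSeg u x) (huy : IsInitSeg u y) (hu : flen x ≤ 6 * flen u) : z = x := by
  have low := hη.lower hx hxx
  have hC : 1 ≤ tot η := by
    have := flen_pos (aut_ne_one η genA_ne_one)
    unfold tot; omega
  have hR : tot η * (2 * (3 * n + 5) + 6) < flen u := by
    by_contra hc
    push Not at hc
    have h1 : 12 * flen u ≤ 12 * (tot η * (2 * (3 * n + 5) + 6)) := Nat.mul_le_mul_left _ hc
    have h2 : n * (n + 1) * tot η ≤ (80 * n + 196) * tot η := by
      have : (80 * n + 196) * tot η = 12 * (tot η * (2 * (3 * n + 5) + 6)) + (8 * n + 4) * tot η := by ring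
      omega
    have h3 := Nat.le_of_mul_le_mul_right h2 (by omega)
    nlinarith
  obtain ⟨M, k0, hk0, hw⟩ := window hη (n := n) (y0 := η⁻¹ y) (by omega) hx (by simp) hxx hyy hux huy hR
  obtain ⟨t, q, k1, t1, t2, t3, t4, t5⟩ := pat_exists (k0 := k0) hn
  obtain ⟨p1, p2, p3, p4, p5⟩ := pat_points t1 t2 t3
  obtain ⟨g, hg⟩ := exists_tame (η'⁻¹ * η)
  have hz0 : ∀ v, (∀ N : ℕ, 1 ≤ N → Btw (η⁻¹ y ^ N)⁻¹ v (η⁻¹ y ^ N)) →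
      ∀ N : ℕ, 1 ≤ N → Btw (η⁻¹ z ^ N)⁻¹ v (η⁻¹ z ^ N) := by
    intro v hv N hN
    rcases hz with rfl | rfl
    · exact hv N hN
    · have := (hv N hN).symm
      rw [map_inv, inv_pow, inv_inv]; exact this
  have C := partC (n := n) (i := t + 1) (ψ := MulAut.conj g * (η'⁻¹ * η)) (κ := g * κ) (z0 := η⁻¹ z)
    (v1 := h * (wordW n ^ M)⁻¹ * wp n k1) (by omega) (by omega) hg
    (by rw [hzκ]; simp [mul_assoc])
    (by
      intro v hv
      apply hz0
      have w0 := hw k1 (by omega) (by omega)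
      have w1 := hw (k1 + 1) (by omega) (by omega)
      have w2 := hw (k1 + 1 + 9) (by omega) (by omega)
      have w3 := hw (k1 + 1 + (t + 1)) (by omega) (by omega)
      have w4 := hw (k1 + 1 + (t + 1) + 9) (by omega) (by omega)
      have w5 := hw (k1 + 1 + (t + 1) + (t + 1) + (t + 2)) (by omega) (by omega)
      rw [p1] at w1
      rw [p2] at w2
      rw [p3] at w3
      rw [p4] at w4
      rw [p5] at w5
      simp only [← mul_assoc] at w0 w1 w2 w3 w4 w5
      simp only [Set.mem_insert_iff, Set.mem_singleton_iff] at hv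
      rcases hv with rfl | rfl | rfl | rfl | rfl | rfl
      · exact w0
      · exact w5
      · exact w1
      · exact w2
      · exact w3
      · exact w4)
  have ei : (t + 1) * (t + 1) - (t + 1) = t * (t + 1) := by
    have : (t + 1) * (t + 1) = t * (t + 1) + (t + 1) := by ring
    omega
  have hV : h * (wordW n ^ M)⁻¹ * wp n k1 * genB * (wp n ((t + 1) * (t + 1) - (t + 1)))⁻¹ =
      h * (wordW n ^ M)⁻¹ * wordW n ^ q := by
    rw [ei, mul_assoc _ (wp n k1) genB, ← p1, t3, wp_add]
    group
  rw [hV] at C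
  have C2 : η⁻¹ z = h * wordW n * h⁻¹ := by
    rw [C]; group
  rw [hx, ← C2]; simp

lemma CyclRed.of_conj {x z : F2} (h : CyclRed x) (hc : ∃ c, z = c * x * c⁻¹) (hl : flen z ≤ flen x) :
    CyclRed z := by
  obtain ⟨c, rfl⟩ := hc
  intro g
  have := h (g * c)
  have e : g * c * x * (g * c)⁻¹ = g * (c * x * c⁻¹) * g⁻¹ := by group
  rw [e] at this
  omega

lemma CyclRed.inv {x : F2} (h : CyclRed x) : CyclRed x⁻¹ := by
  intro g
  have := h g
  rw [flen_inv, ← flen_inv (g * x⁻¹ * g⁻¹)]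
  have e : (g * x⁻¹ * g⁻¹)⁻¹ = g * x * g⁻¹ := by group
  rw [e]; exact this

lemma wordW_ne {n : ℕ} (hn : 1 ≤ n) : wordW n ≠ 1 := by
  intro h
  have := flen_w n
  rw [h, flen_one] at this
  have : 1 ≤ n * (n + 1) := by nlinarith
  omega

lemma main_pos {η η' : MulAut F2} {n : ℕ} (hn : 101 < n) {x y u : F2}
    (hx : CyclRed x) (hy : CyclRed y) (cx : IsConj (η (wordW n)) x)
    (cy : IsConj (η' (wordW n)) y ∨ IsConj (η' (wordW n))⁻¹ y)
    (hux : IsInitSeg u x) (huy : IsInitSeg u y) (hu : flen x ≤ 6 * flen u) : x = y := by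
  obtain ⟨g, hg⟩ := exists_tame η
  obtain ⟨c, hc⟩ := isConj_iff.1 cx
  have x0 : x ≠ 1 := by
    rintro rfl
    have : η (wordW n) = 1 := by
      have h2 : c⁻¹ * (c * η (wordW n) * c⁻¹) * c = η (wordW n) := by group
      rw [← h2, hc]; simp
    exact aut_ne_one η (wordW_ne (by omega)) this
  have upos : 0 < flen u := by have := flen_pos x0; omega
  have hxx := cyclRed_sq hx
  have hyy := cyclRed_sq hy
  have ex : x = (MulAut.conj g * η) ((MulAut.conj g * η)⁻¹ (c * g⁻¹) * wordW n *
      ((MulAut.conj g * η)⁻¹ (c * g⁻¹))⁻¹) := by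
    rw [map_mul, map_mul, map_inv]
    rw [MulAut.apply_inv_self, ← hc]
    simp only [MulAut.mul_apply, MulAut.conj_apply]
    group
  obtain ⟨z, hz, κ, hκ⟩ : ∃ z, (z = y ∨ z = y⁻¹) ∧ ∃ κ, z = η' (κ * wordW n * κ⁻¹) := by
    rcases cy with cy | cy
    · obtain ⟨c', hc'⟩ := isConj_iff.1 cy
      refine ⟨y, Or.inl rfl, η'⁻¹ c', ?_⟩
      rw [map_mul, map_mul, map_inv, MulAut.apply_inv_self, hc']
    · obtain ⟨c', hc'⟩ := isConj_iff.1 cy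
      refine ⟨y⁻¹, Or.inr rfl, η'⁻¹ c', ?_⟩
      rw [map_mul, map_mul, map_inv, MulAut.apply_inv_self, ← hc']
      group
  have key := main_tame hg hn ex hz hκ hxx hyy hux huy hu
  rcases hz with rfl | rfl
  · exact key.symm
  · exfalso
    obtain ⟨x', e1, l1⟩ := hux
    obtain ⟨y', e2, l2⟩ := huy
    have e3 : x * x = y'⁻¹ * x' := by
      nth_rewrite 1 [← key]
      rw [e2, e1]; group
    have l3 := flen_mul_le y'⁻¹ x'
    have l4 : flen y = flen x := by rw [← key, flen_inv]
    rw [← e3, flen_inv] at l3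
    omega

lemma flip_seg {x u : F2} (hx : CyclRed x) (hu : IsInitSeg u x) :
    CyclRed (u⁻¹ * x⁻¹ * u) ∧ IsInitSeg u⁻¹ (u⁻¹ * x⁻¹ * u) ∧ flen (u⁻¹ * x⁻¹ * u) = flen x := by
  obtain ⟨x', e1, l1⟩ := hu
  have e : u⁻¹ * x⁻¹ * u = u⁻¹ * x'⁻¹ := by rw [e1]; group
  have l2 := flen_mul_le u⁻¹ x'⁻¹
  rw [flen_inv, flen_inv] at l2
  have l3 := hx.inv u⁻¹
  rw [inv_inv, flen_inv, e] at l3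
  refine ⟨hx.inv.of_conj ⟨u⁻¹, by group⟩ (by rw [e, flen_inv]; omega), ⟨x'⁻¹, e, ?_⟩, ?_⟩
  · rw [e, flen_inv, flen_inv]; omega
  · rw [e]; omega

lemma conj_flip {s x u : F2} (h : IsConj s x) : IsConj s⁻¹ (u⁻¹ * x⁻¹ * u) := by
  obtain ⟨c, hc⟩ := isConj_iff.1 h
  rw [isConj_iff]
  exact ⟨u⁻¹ * c, by rw [← hc]; group⟩

lemma main_all {η η' : MulAut F2} {n : ℕ} (hn : 101 < n) {x y u : F2}
    (hx : CyclRed x) (hy : CyclRed y) (cx : IsConj (η (wordW n)) x ∨ IsConj (η (wordW n))⁻¹ x)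
    (cy : IsConj (η' (wordW n)) y ∨ IsConj (η' (wordW n))⁻¹ y)
    (hux : IsInitSeg u x) (huy : IsInitSeg u y) (hu : flen x ≤ 6 * flen u) : x = y := by
  rcases cx with cx | cx
  · exact main_pos hn hx hy cx cy hux huy hu
  · obtain ⟨a1, a2, a3⟩ := flip_seg hx hux
    obtain ⟨b1, b2, b3⟩ := flip_seg hy huy
    have cx' := conj_flip (u := u) cx
    rw [inv_inv] at cx'
    have cy' : IsConj (η' (wordW n)) (u⁻¹ * y⁻¹ * u) ∨ IsConj (η' (wordW n))⁻¹ (u⁻¹ * y⁻¹ * u) := by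
      rcases cy with cy | cy
      · exact Or.inr (conj_flip cy)
      · have := conj_flip (u := u) cy
        rw [inv_inv] at this
        exact Or.inl this
    have := main_pos hn a1 b1 cx' cy' a2 b2 (by rw [a3, flen_inv]; exact hu)
    have h2 := mul_right_cancel this
    exact inv_injective (mul_left_cancel h2)

theorem fin_thm (n : ℕ) (hn : 101 < n) :
    ∃ T : Set (MulAut F2), IsLeftTransversal innerF2 T ∧
      C'sixth ((fun η : MulAut F2 => η (wordW n)) '' T) := by
  refine ⟨Set.range (fun q : MulAut F2 ⧸ innerF2 => q.out), ?_, ?_⟩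
  · intro g
    refine ⟨(QuotientGroup.mk g : MulAut F2 ⧸ innerF2).out, ⟨⟨_, rfl⟩, ?_⟩, ?_⟩
    · rw [← QuotientGroup.eq]
      exact (QuotientGroup.out_eq' _).symm
    · rintro t ⟨⟨q, rfl⟩, ht⟩
      rw [← QuotientGroup.eq] at ht
      have : (QuotientGroup.mk q.out : MulAut F2 ⧸ innerF2) = q := QuotientGroup.out_eq' q
      rw [this] at ht
      simp only [ht]
  · rintro x ⟨hx, _, ⟨η, _, rfl⟩, cx⟩ y ⟨hy, _, ⟨η', _, rfl⟩, cy⟩ hne u hux huy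
    by_contra hc
    push Not at hc
    rcases le_total (flen x) (flen y) with hl | hl
    · rw [min_eq_left hl] at hc
      exact hne (main_all hn hx hy cx cy hux huy hc)
    · rw [min_eq_right hl] at hc
      exact hne (main_all hn hy hx cy cx huy hux hc).symm


/-- **Theorem 1.6 / 8.23.** There is a transversal `T` for the left cosets of `F₂` (the inner
automorphisms) in `Aut(F₂)` such that, for `w = a b a² b² ⋯ aⁿ bⁿ` with `n > 101`, the set
`{η(w) : η ∈ T}` satisfies the `C'(1/6)` small cancellation property. -/
theorem transversal_small_cancellation (n : ℕ) (hn : 101 < n) :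
    ∃ T : Set (MulAut F2), IsLeftTransversal innerF2 T ∧
      C'sixth ((fun η : MulAut F2 => η (wordW n)) '' T) := by
  exact fin_thm n hn

end IRSPaper
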